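/- arXiv:1809.02963 — 2 statements merged into one kernel-verified Lean document; each statement's English description precedes it below -/
import Mathlib

section
/- Let M, N ≥ 1 and H ≥ H₀ ≥ 1 be integers, let φ_U, θ_U, φ_V, θ_V > 0, κ > 0, and let U₀ ∈ ℝ^{M×H₀}, V₀ ∈ ℝ^{H₀×N} have all entries in the open interval (0, κ). Define f_{ij}^k(U,V) = u_{ik}v_{kj} − u⁰_{ik}v⁰_{kj} for 1 ≤ k ≤ H₀ and f_{ij}^k(U,V) = u_{ik}v_{kj} for H₀ < k ≤ H, and let D = {(U,V) ∈ [0,κ]^{M×H} × [0,κ]^{H×N} : f_{ij}^k(U,V) ≥ 0 for all i, j, k}. Then for every real number s, the Lebesgue integral ∫_D (‖UV − U₀V₀‖²)^{−s} φ(U,V) dU dV is finite if and only if s < ½[(H−H₀)·min{Mφ_U, Nφ_V} + H₀(M+N−1)]. (Equivalently: under the sign condition f_{ij}^k ≥ 0, the real log canonical threshold equals ½[(H−H₀)·min{Mφ_U, Nφ_V} + H₀(M+N−1)].) -/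
/-! The region splits over the latent index: writing `w_k` for the block formed by column `k` of `U` and
row `k` of `V`, the sign condition is a condition on each `w_k` separately, and the prior is a
product over blocks. Let `z_k ≥ 0` be the sum of the entries `f_{ij}^k` and `Z = ∑ z_k`. The sign
condition rules out cancellation between components, so `Z ^ 2 / (M * N) ≤ ‖UV - U₀V₀‖² ≤ Z ^ 2`.

Each block has an exponent `a_k` (`HasExponent`): negative moments of `z_k` of order below `a_k` are
finite, and `{0 < z_k ≤ ε}` has prior mass at least of order `ε ^ a_k`.

* For target `0` one has `z = (∑ u_i) (∑ v_j)` and `a = min (M φU) (N φV)` (`hasExponent_zero`).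
* For a positive rank-one target `a = M + N - 1` (`hasExponent_pos`): a rank-one matrix is determined
  by one row and one column, and their `M + N - 1` entries together with one remaining scale parameter
  are coordinates for the block. The change of variables is `lintegral_pivot`, and `cross_bounds`
  shows that closeness on the cross forces closeness everywhere.

For `s < (∑ a_k) / 2` the inequality `Z ^ (-t ∑ a_k) ≤ ∏ z_k ^ (-t a_k)` and Tonelli
(`lintegral_blocks`) bound the integral by a product of finite block integrals. For
`s ≥ (∑ a_k) / 2`, the set where all `z_k ∈ (0, ε]` has prior mass at least of order `ε ^ (∑ a_k)`
and the loss is `O(ε ^ 2)` there, so it contributes an amount bounded below as `ε → 0`; these sets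
decrease to `∅`, so the integral is infinite. Summing the `a_k` gives the stated threshold. -/

open MeasureTheory Finset

/-! ### Tonelli over columns -/

/-- Tonelli for a product of functions of the separate coordinates of a finite power. -/
theorem lintegral_fin_prod {X : Type*} [MeasureSpace X] [SigmaFinite (volume : Measure X)] :
    ∀ (n : ℕ) (f : Fin n → X → ENNReal) (_ : ∀ i, Measurable (f i)),
      ∫⁻ x : Fin n → X, ∏ i, f i (x i) = ∏ i, ∫⁻ x, f i x
  | 0, f, _ => by
      simp [volume_pi]
  | n + 1, f, hf => by
      have hm : Measurable fun x : Fin n → X => ∏ i, f i.succ (x i) :=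
        Finset.measurable_prod _ fun i _ => (hf _).comp (measurable_pi_apply i)
      rw [Fin.prod_univ_succ, ← lintegral_fin_prod n (fun i => f i.succ) (fun i => hf _),
        ← lintegral_prod_mul (hf 0).aemeasurable hm.aemeasurable, ← Measure.volume_eq_prod,
        ← (volume_preserving_piFinSuccAbove (fun _ : Fin (n + 1) => X) 0).lintegral_comp_emb
          (MeasurableEquiv.measurableEmbedding _)]
      refine lintegral_congr fun x => ?_
      rw [Fin.prod_univ_succ]
      simp [MeasurableEquiv.piFinSuccAbove_apply, Fin.tail]

theorem measurePreserving_uncurry (M H : ℕ) :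
    MeasurePreserving (MeasurableEquiv.curry (Fin M) (Fin H) ℝ).symm := by
  refine ⟨(MeasurableEquiv.curry (Fin M) (Fin H) ℝ).symm.measurable, ?_⟩
  refine (Measure.pi_eq fun s hs => ?_).symm
  rw [Measure.map_apply (MeasurableEquiv.measurable _) (.univ_pi hs)]
  have : (MeasurableEquiv.curry (Fin M) (Fin H) ℝ).symm ⁻¹' (Set.univ.pi s)
      = Set.univ.pi fun i => Set.univ.pi fun j => s (i, j) := by
    ext x
    simp [MeasurableEquiv.coe_curry_symm, Set.mem_pi, Function.uncurry]
  rw [this, volume_pi_pi]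
  simp_rw [volume_pi_pi]
  rw [← Finset.univ_product_univ, Finset.prod_product]

theorem measurePreserving_uncurry_swap (M H : ℕ) :
    MeasurePreserving (fun (x : Fin H → Fin M → ℝ) (q : Fin M × Fin H) => x q.2 q.1) := by
  have hm : Measurable (fun (x : Fin H → Fin M → ℝ) (q : Fin M × Fin H) => x q.2 q.1) := by
    fun_prop
  refine ⟨hm, ?_⟩
  refine (Measure.pi_eq fun s hs => ?_).symm
  rw [Measure.map_apply hm (.univ_pi hs)]
  have : (fun (x : Fin H → Fin M → ℝ) (q : Fin M × Fin H) => x q.2 q.1) ⁻¹' (Set.univ.pi s)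
      = Set.univ.pi fun j => Set.univ.pi fun i => s (i, j) := by
    ext x
    simp only [Set.mem_preimage, Set.mem_pi, Set.mem_univ, true_imp_iff, Prod.forall]
    exact forall_comm
  rw [this, volume_pi_pi]
  simp_rw [volume_pi_pi]
  rw [← Finset.univ_product_univ, Finset.prod_product_right]

/-- Reindexing a matrix from a family of columns to a family of rows preserves Lebesgue measure. -/
theorem measurePreserving_transpose (M H : ℕ) :
    MeasurePreserving (fun (x : Fin H → Fin M → ℝ) (i : Fin M) (k : Fin H) => x k i) :=
  ((measurePreserving_uncurry M H).symm).comp (measurePreserving_uncurry_swap M H)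

/-- Tonelli over latent components: a product over `k` of functions of the block formed by column `k`
of `U` and row `k` of `V` integrates to the product of the block integrals. -/
theorem lintegral_blocks (M N H : ℕ)
    (F : Fin H → (Fin M → ℝ) × (Fin N → ℝ) → ENNReal) (hF : ∀ k, Measurable (F k)) :
    ∫⁻ p : (Fin M → Fin H → ℝ) × (Fin H → Fin N → ℝ), ∏ k, F k (fun i => p.1 i k, p.2 k)
      = ∏ k, ∫⁻ w, F k w := by
  have hm : Measurable fun p : (Fin M → Fin H → ℝ) × (Fin H → Fin N → ℝ) =>
      ∏ k, F k (fun i => p.1 i k, p.2 k) :=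
    Finset.measurable_prod _ fun k _ => (hF k).comp (by fun_prop)
  have h1 := ((measurePreserving_transpose M H).prod
    (MeasurePreserving.id (volume : Measure (Fin H → Fin N → ℝ)))).lintegral_comp hm
  have h2 := (volume_measurePreserving_arrowProdEquivProdArrow
    (Fin M → ℝ) (Fin N → ℝ) (Fin H)).lintegral_comp_emb
    (MeasurableEquiv.measurableEmbedding _)
    (fun p => ∏ k, F k (p.1 k, p.2 k))
  rw [← lintegral_fin_prod H F hF, Measure.volume_eq_prod, ← h1]
  exact h2.symm


/-! ### One-dimensional estimates and the pivot substitution -/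

/-- A negative power of an upper bound `Z` of all `x i` splits into a product of negative powers of the
`x i`, for any splitting of the exponent. In `ENNReal` this includes `Z ≤ 0`, where both sides are
infinite. -/
theorem rpow_neg_sum_le {ι : Type*} (s : Finset ι) (hs : s.Nonempty) (Z : ℝ) (x : ι → ℝ)
    (b : ι → ℝ) (hb : ∀ i ∈ s, 0 < b i) (hx : ∀ i ∈ s, x i ≤ Z) :
    ENNReal.ofReal Z ^ (-∑ i ∈ s, b i) ≤ ∏ i ∈ s, ENNReal.ofReal (x i) ^ (-b i) := by
  rcases le_or_gt Z 0 with hZ | hZ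
  · have : ∀ i ∈ s, ENNReal.ofReal (x i) ^ (-b i) = ⊤ := fun i hi => by
      rw [ENNReal.ofReal_of_nonpos ((hx i hi).trans hZ), ENNReal.zero_rpow_of_neg]
      have := hb i hi; linarith
    rw [Finset.prod_congr rfl this, Finset.prod_const, ENNReal.top_pow hs.card_ne_zero]
    exact le_top
  · have h0 : ENNReal.ofReal Z ≠ 0 := by simpa using hZ
    have key : ENNReal.ofReal Z ^ (-∑ i ∈ s, b i) = ∏ i ∈ s, ENNReal.ofReal Z ^ (-b i) := by
      classical
      clear hs hb hx
      induction s using Finset.induction_on with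
      | empty => simp
      | insert a s ha ih =>
        rw [Finset.sum_insert ha, Finset.prod_insert ha, neg_add,
          ENNReal.rpow_add _ _ h0 ENNReal.ofReal_ne_top, ih]
    rw [key]
    refine Finset.prod_le_prod' fun i hi => ?_
    rw [ENNReal.rpow_neg, ENNReal.rpow_neg]
    exact ENNReal.inv_le_inv.2 (ENNReal.rpow_le_rpow (ENNReal.ofReal_le_ofReal (hx i hi))
      (hb i hi).le)

theorem lintegral_rpow_ne_top (κ β r : ℝ) (h : -1 < r - β) :
    ∫⁻ x in Set.Icc 0 κ, ENNReal.ofReal x ^ (-β) * ENNReal.ofReal (x ^ r) ≠ ⊤ := by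
  rcases lt_or_ge κ 0 with hκ | hκ
  · simp [Set.Icc_eq_empty (not_le.2 hκ)]
  rw [setLIntegral_congr Ioc_ae_eq_Icc.symm]
  have h1 : ∫⁻ x in Set.Ioc 0 κ, ENNReal.ofReal x ^ (-β) * ENNReal.ofReal (x ^ r)
      = ∫⁻ x in Set.Ioc 0 κ, ENNReal.ofReal (x ^ (r - β)) := by
    refine setLIntegral_congr_fun measurableSet_Ioc fun x hx => ?_
    rw [ENNReal.ofReal_rpow_of_pos hx.1, ← ENNReal.ofReal_mul (Real.rpow_nonneg hx.1.le _),
      ← Real.rpow_add hx.1]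
    ring_nf
  rw [h1]
  have h2 := ((intervalIntegrable_iff_integrableOn_Ioc_of_le hκ).1
    (intervalIntegral.intervalIntegrable_rpow' (a := 0) (b := κ) h))
  have h3 := h2.lintegral_lt_top
  exact h3.ne

theorem lintegral_rpow_Ioc (r η : ℝ) (h : -1 < r) (hη : 0 ≤ η) :
    ∫⁻ x in Set.Ioc 0 η, ENNReal.ofReal (x ^ r) = ENNReal.ofReal (η ^ (r + 1) / (r + 1)) := by
  have h2 := ((intervalIntegrable_iff_integrableOn_Ioc_of_le hη).1
    (intervalIntegral.intervalIntegrable_rpow' (a := 0) (b := η) h))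
  rw [← ofReal_integral_eq_lintegral_ofReal h2, ← intervalIntegral.integral_of_le hη,
    integral_rpow (Or.inl h), Real.zero_rpow (by linarith), sub_zero]
  exact (ae_restrict_iff' measurableSet_Ioc).2 (ae_of_all _ fun x hx => Real.rpow_nonneg hx.1.le _)

/-- The gamma density. -/
noncomputable def gam (φ θ x : ℝ) : ℝ := θ ^ φ / Real.Gamma φ * x ^ (φ - 1) * Real.exp (-θ * x)

theorem measurable_gam (φ θ : ℝ) : Measurable (gam φ θ) := by
  unfold gam; fun_prop

theorem gam_const_pos {φ θ : ℝ} (hφ : 0 < φ) (hθ : 0 < θ) : 0 < θ ^ φ / Real.Gamma φ :=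
  div_pos (Real.rpow_pos_of_pos hθ _) (Real.Gamma_pos_of_pos hφ)

theorem gam_nonneg {φ θ x : ℝ} (hφ : 0 < φ) (hθ : 0 < θ) (hx : 0 ≤ x) : 0 ≤ gam φ θ x := by
  have := gam_const_pos hφ hθ
  have := Real.rpow_nonneg hx (φ - 1)
  unfold gam; positivity

/-- The gamma density has finite negative moments of every order `β < φ` on bounded intervals. -/
theorem lintegral_gam_ne_top {φ θ : ℝ} (hφ : 0 < φ) (hθ : 0 < θ) (κ β : ℝ) (h : β < φ) :
    ∫⁻ x in Set.Icc 0 κ, ENNReal.ofReal x ^ (-β) * ENNReal.ofReal (gam φ θ x) ≠ ⊤ := by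
  have hC := gam_const_pos hφ hθ
  have h1 := lintegral_rpow_ne_top κ β (φ - 1) (by linarith)
  refine ne_top_of_le_ne_top (ENNReal.mul_ne_top
    (ENNReal.ofReal_ne_top (r := θ ^ φ / Real.Gamma φ)) h1) ?_
  rw [← lintegral_const_mul _ (by fun_prop)]
  refine setLIntegral_mono' measurableSet_Icc fun x hx => ?_
  rw [mul_left_comm, ← ENNReal.ofReal_mul hC.le]
  gcongr
  unfold gam
  have := Real.rpow_nonneg hx.1 (φ - 1)
  refine mul_le_of_le_one_right (by positivity) (Real.exp_le_one_iff.2 ?_)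
  have := mul_nonneg hθ.le hx.1
  linarith

/-- The gamma mass of `(0, η]` is at least of order `η ^ φ`. -/
theorem lintegral_gam_ge {φ θ : ℝ} (hφ : 0 < φ) (hθ : 0 < θ) (κ : ℝ) :
    ∃ m : ℝ, 0 < m ∧ ∀ η, 0 < η → η ≤ κ →
      ENNReal.ofReal (m * η ^ φ) ≤ ∫⁻ x in Set.Ioc 0 η, ENNReal.ofReal (gam φ θ x) := by
  have hC := gam_const_pos hφ hθ
  refine ⟨θ ^ φ / Real.Gamma φ * Real.exp (-θ * κ) / φ, by positivity, fun η hη hηκ => ?_⟩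
  have h1 := lintegral_rpow_Ioc (φ - 1) η (by linarith) hη.le
  rw [sub_add_cancel] at h1
  have h2 : θ ^ φ / Real.Gamma φ * Real.exp (-θ * κ) / φ * η ^ φ
    = θ ^ φ / Real.Gamma φ * Real.exp (-θ * κ) * (η ^ φ / φ) := by ring
  rw [h2, ENNReal.ofReal_mul (by positivity), ← h1, ← lintegral_const_mul _ (by fun_prop)]
  refine setLIntegral_mono' measurableSet_Ioc fun x hx => ?_
  rw [← ENNReal.ofReal_mul (by positivity)]
  apply ENNReal.ofReal_le_ofReal
  unfold gam
  have := Real.rpow_nonneg hx.1.le (φ - 1)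
  rw [mul_right_comm]
  gcongr ?_ * ?_
  refine Real.exp_le_exp.2 ?_
  have := mul_le_mul_of_nonneg_left (hx.2.trans hηκ) hθ.le
  linarith

theorem gam_pos {φ θ x : ℝ} (hφ : 0 < φ) (hθ : 0 < θ) (hx : 0 < x) : 0 < gam φ θ x := by
  have := gam_const_pos hφ hθ
  unfold gam; positivity

/-- Away from the origin the gamma density is bounded above and below by positive constants. -/
theorem gam_bounds {φ θ : ℝ} (hφ : 0 < φ) (hθ : 0 < θ) {l κ : ℝ} (hl : 0 < l) :
    ∃ m C : ℝ, 0 < m ∧ ∀ x ∈ Set.Icc l κ, m ≤ gam φ θ x ∧ gam φ θ x ≤ C := by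
  have hc : ContinuousOn (gam φ θ) (Set.Icc l κ) := by
    unfold gam
    refine ((continuousOn_const.mul ?_).mul (by fun_prop))
    exact continuousOn_id.rpow_const fun x hx => Or.inl (hl.trans_le hx.1).ne'
  rcases (Set.Icc l κ).eq_empty_or_nonempty with he | hne
  · exact ⟨1, 1, one_pos, by simp [he]⟩
  obtain ⟨x, hx, hmin⟩ := isCompact_Icc.exists_isMinOn hne hc
  obtain ⟨y, hy, hmax⟩ := isCompact_Icc.exists_isMaxOn hne hc
  exact ⟨gam φ θ x, gam φ θ y, gam_pos hφ hθ (hl.trans_le hx.1), fun z hz => ⟨hmin hz, hmax hz⟩⟩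

/-- The shears `v j ↦ v j - e' j / u i₀` (with `u i₀` held fixed) and `u i ↦ u i - e i / v j₀` for
`i ≠ i₀` (with `v j₀` held fixed) preserve Lebesgue measure, so the integral factors into
one-dimensional ones. The coordinate `u i₀` is the pivot. -/
theorem lintegral_pivot {M N : ℕ} (i₀ : Fin M) (j₀ : Fin N) (α : ℝ → ENNReal) (q : Fin M → ℝ → ENNReal)
    (q' : Fin N → ℝ → ENNReal) (e : Fin M → ℝ) (e' : Fin N → ℝ) (hα : Measurable α)
    (hq : ∀ i, Measurable (q i)) (hq' : ∀ j, Measurable (q' j)) :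
    ∫⁻ w : (Fin M → ℝ) × (Fin N → ℝ), α (w.1 i₀) *
      (∏ j, q' j (w.2 j - e' j / w.1 i₀)) * ∏ i ∈ univ.erase i₀, q i (w.1 i - e i / w.2 j₀)
    = (∫⁻ x, α x) * (∏ j, ∫⁻ y, q' j y) * ∏ i ∈ univ.erase i₀, ∫⁻ x, q i x := by
  have hm : Measurable fun w : (Fin M → ℝ) × (Fin N → ℝ) => α (w.1 i₀) *
      (∏ j, q' j (w.2 j - e' j / w.1 i₀)) * ∏ i ∈ univ.erase i₀, q i (w.1 i - e i / w.2 j₀) := by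
    fun_prop
  rw [Measure.volume_eq_prod, lintegral_prod_symm' _ hm]
  have hin : ∀ v : Fin N → ℝ, ∫⁻ u : Fin M → ℝ, α (u i₀) *
      (∏ j, q' j (v j - e' j / u i₀)) * ∏ i ∈ univ.erase i₀, q i (u i - e i / v j₀)
      = (∫⁻ x, α x * ∏ j, q' j (v j - e' j / x)) * ∏ i ∈ univ.erase i₀, ∫⁻ x, q i x := by
    intro v
    have := lintegral_fin_prod M (fun i x => if i = i₀ then α x * ∏ j, q' j (v j - e' j / x)
      else q i (x - e i / v j₀)) (fun i => by
        by_cases h : i = i₀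
        · simp only [h, if_true]; fun_prop
        · simp only [h, if_false]; fun_prop)
    rw [← Finset.mul_prod_erase univ _ (Finset.mem_univ i₀)] at this
    simp only [if_true] at this
    convert this using 1
    · refine lintegral_congr fun u => ?_
      rw [← Finset.mul_prod_erase univ _ (Finset.mem_univ i₀)]
      simp only [if_true]
      congr 1
      exact Finset.prod_congr rfl fun i hi => by rw [if_neg (Finset.ne_of_mem_erase hi)]
    · congr 1
      refine Finset.prod_congr rfl fun i hi => ?_
      simp only [if_neg (Finset.ne_of_mem_erase hi)]
      exact (lintegral_sub_right_eq_self (q i) _).symm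
  simp only [hin]
  rw [lintegral_mul_const _ (Measurable.lintegral_prod_right (by fun_prop))]
  congr 1
  rw [lintegral_lintegral_swap (by fun_prop)]
  rw [← lintegral_mul_const _ hα]
  refine lintegral_congr fun x => ?_
  rw [lintegral_const_mul _ (by fun_prop)]
  rw [lintegral_fin_prod N (fun j y => q' j (y - e' j / x)) (fun j => by fun_prop)]
  congr 1
  exact Finset.prod_congr rfl fun j _ => lintegral_sub_right_eq_self (q' j) _


/-! ### Column blocks, and the block with zero target -/

/-- The region of one block `w = (u, v)`: entries in `[0, κ]` and `u i * v j ≥ c i j`, where `c` is the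
target of the block. -/
def blockDom {M N : ℕ} (κ : ℝ) (c : Fin M → Fin N → ℝ) : Set ((Fin M → ℝ) × (Fin N → ℝ)) :=
  {w | ((∀ i, w.1 i ∈ Set.Icc 0 κ) ∧ ∀ j, w.2 j ∈ Set.Icc 0 κ) ∧
    ∀ i j, 0 ≤ w.1 i * w.2 j - c i j}

/-- The total excess `∑ i j, (u i * v j - c i j)` of a block over its target. -/
def blockSum {M N : ℕ} (c : Fin M → Fin N → ℝ) (w : (Fin M → ℝ) × (Fin N → ℝ)) : ℝ :=
  ∑ i, ∑ j, (w.1 i * w.2 j - c i j)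

/-- The gamma prior density of a single block, with values in `ENNReal`. -/
noncomputable def prior {M N : ℕ} (φU θU φV θV : ℝ) (w : (Fin M → ℝ) × (Fin N → ℝ)) : ENNReal :=
  (∏ i, ENNReal.ofReal (gam φU θU (w.1 i))) * ∏ j, ENNReal.ofReal (gam φV θV (w.2 j))

theorem measurable_blockSum {M N : ℕ} (c : Fin M → Fin N → ℝ) : Measurable (blockSum c) := by
  unfold blockSum; fun_prop

theorem measurable_prior {M N : ℕ} (φU θU φV θV : ℝ) :
    Measurable (prior (M := M) (N := N) φU θU φV θV) := by
  have := measurable_gam φU θU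
  have := measurable_gam φV θV
  unfold prior; fun_prop

theorem measurableSet_blockDom {M N : ℕ} (κ : ℝ) (c : Fin M → Fin N → ℝ) :
    MeasurableSet (blockDom κ c) := by
  refine IsClosed.measurableSet ?_
  have h : blockDom κ c = (⋂ i, {w | w.1 i ∈ Set.Icc 0 κ}) ∩ (⋂ j, {w | w.2 j ∈ Set.Icc 0 κ}) ∩
      ⋂ i, ⋂ j, {w | 0 ≤ w.1 i * w.2 j - c i j} := by
    ext w; simp [blockDom]
  rw [h]
  refine ((isClosed_iInter fun i => isClosed_Icc.preimage (by fun_prop)).inter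
    (isClosed_iInter fun j => isClosed_Icc.preimage (by fun_prop))).inter
    (isClosed_iInter fun i => isClosed_iInter fun j => isClosed_le (by fun_prop) (by fun_prop))

theorem blockSum_nonneg {M N : ℕ} {κ : ℝ} {c : Fin M → Fin N → ℝ}
    {w : (Fin M → ℝ) × (Fin N → ℝ)} (hw : w ∈ blockDom κ c) : 0 ≤ blockSum c w :=
  Finset.sum_nonneg fun i _ => Finset.sum_nonneg fun j _ => hw.2 i j

theorem le_blockSum {M N : ℕ} {κ : ℝ} {c : Fin M → Fin N → ℝ}
    {w : (Fin M → ℝ) × (Fin N → ℝ)} (hw : w ∈ blockDom κ c) (i : Fin M) (j : Fin N) :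
    w.1 i * w.2 j - c i j ≤ blockSum c w :=
  (Finset.single_le_sum (f := fun j => w.1 i * w.2 j - c i j) (fun j _ => hw.2 i j)
    (Finset.mem_univ j)).trans
  (Finset.single_le_sum (f := fun i => ∑ j, (w.1 i * w.2 j - c i j))
    (fun i _ => Finset.sum_nonneg fun j _ => hw.2 i j) (Finset.mem_univ i))

/-- `a` is the exponent of the block with target `c`: every negative moment of `blockSum c` of order below
`a` is finite, and the prior mass of `{0 < blockSum c ≤ ε}` is at least of order `ε ^ a` for small
`ε`. The moment order is written `t * a` with `0 < t < 1`, so that one `t` serves all blocks at once. -/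
structure HasExponent {M N : ℕ} (φU θU φV θV κ : ℝ) (c : Fin M → Fin N → ℝ) (a : ℝ) : Prop where
  upper : ∀ t, 0 < t → t < 1 → ∫⁻ w in blockDom κ c,
    ENNReal.ofReal (blockSum c w) ^ (-(t * a)) * prior φU θU φV θV w ≠ ⊤
  lower : ∃ m : ℝ, 0 < m ∧ ∀ᶠ ε in nhdsWithin (0 : ℝ) (Set.Ioi 0), ENNReal.ofReal (m * ε ^ a) ≤
    ∫⁻ w in {w ∈ blockDom κ c | 0 < blockSum c w ∧ blockSum c w ≤ ε}, prior φU θU φV θV w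

theorem lintegral_prod_prod {M N : ℕ} {F G : ℝ → ENNReal} (mF : Measurable F) (mG : Measurable G) :
    ∫⁻ w : (Fin M → ℝ) × (Fin N → ℝ), (∏ i, F (w.1 i)) * ∏ j, G (w.2 j)
      = (∫⁻ x, F x) ^ M * (∫⁻ y, G y) ^ N := by
  have h1 : Measurable fun u : Fin M → ℝ => ∏ i, F (u i) := by fun_prop
  have h2 : Measurable fun v : Fin N → ℝ => ∏ j, G (v j) := by fun_prop
  rw [Measure.volume_eq_prod, lintegral_prod_mul h1.aemeasurable h2.aemeasurable,
    lintegral_fin_prod M (fun _ => F) (fun _ => mF),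
    lintegral_fin_prod N (fun _ => G) (fun _ => mG)]
  simp

section zero
variable {M N : ℕ} {φU θU φV θV κ : ℝ}

/-- With zero target the excess is `(∑ i, u i) * (∑ j, v j)`. Its power `-b` splits evenly over the `u i`
and over the `v j`, giving orders `b / M < φU` and `b / N < φV`. -/
theorem zero_upper (hM : 1 ≤ M) (hN : 1 ≤ N) (hφU : 0 < φU) (hθU : 0 < θU) (hφV : 0 < φV)
    (hθV : 0 < θV) (b : ℝ) (hb : 0 < b) (hbU : b < M * φU) (hbV : b < N * φV) :
    ∫⁻ w in blockDom (M := M) (N := N) κ (fun _ _ => 0),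
      ENNReal.ofReal (blockSum (fun _ _ => 0) w) ^ (-b) * prior φU θU φV θV w ≠ ⊤ := by
  have hM' : (0 : ℝ) < M := by exact_mod_cast hM
  have hN' : (0 : ℝ) < N := by exact_mod_cast hN
  have mgU := measurable_gam φU θU
  have mgV := measurable_gam φV θV
  set F : ℝ → ENNReal := (Set.Icc 0 κ).indicator
    fun x => ENNReal.ofReal x ^ (-(b / M)) * ENNReal.ofReal (gam φU θU x) with hF
  set G : ℝ → ENNReal := (Set.Icc 0 κ).indicator
    fun x => ENNReal.ofReal x ^ (-(b / N)) * ENNReal.ofReal (gam φV θV x) with hG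
  have mF : Measurable F := Measurable.indicator (by fun_prop) measurableSet_Icc
  have mG : Measurable G := Measurable.indicator (by fun_prop) measurableSet_Icc
  have iF : ∫⁻ x, F x ≠ ⊤ := by
    rw [hF, lintegral_indicator measurableSet_Icc]
    exact lintegral_gam_ne_top hφU hθU κ _ ((div_lt_iff₀ hM').2 (by linarith))
  have iG : ∫⁻ x, G x ≠ ⊤ := by
    rw [hG, lintegral_indicator measurableSet_Icc]
    exact lintegral_gam_ne_top hφV hθV κ _ ((div_lt_iff₀ hN').2 (by linarith))
  have hfin : ∫⁻ w : (Fin M → ℝ) × (Fin N → ℝ), (∏ i, F (w.1 i)) * ∏ j, G (w.2 j) ≠ ⊤ := by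
    rw [lintegral_prod_prod mF mG]
    exact ENNReal.mul_ne_top (ENNReal.pow_ne_top iF) (ENNReal.pow_ne_top iG)
  refine ne_top_of_le_ne_top hfin (le_trans ?_ (setLIntegral_le_lintegral (blockDom κ fun _ _ => 0) _))
  refine setLIntegral_mono' (measurableSet_blockDom _ _) fun w hw => ?_
  have hu : ∀ i, 0 ≤ w.1 i := fun i => (hw.1.1 i).1
  have hv : ∀ j, 0 ≤ w.2 j := fun j => (hw.1.2 j).1
  have hS : blockSum (fun _ _ => 0) w = (∑ i, w.1 i) * ∑ j, w.2 j := by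
    simp [blockSum, Finset.sum_mul_sum]
  have q1 := rpow_neg_sum_le univ ⟨(⟨0, hM⟩ : Fin M), mem_univ _⟩ (∑ i, w.1 i) w.1
    (fun _ => b / M) (fun _ _ => by positivity)
    (fun i _ => Finset.single_le_sum (fun i _ => hu i) (mem_univ i))
  have q2 := rpow_neg_sum_le univ ⟨(⟨0, hN⟩ : Fin N), mem_univ _⟩ (∑ i, w.2 i) w.2
    (fun _ => b / N) (fun _ _ => by positivity)
    (fun i _ => Finset.single_le_sum (fun i _ => hv i) (mem_univ i))
  have e1 : ∑ _i : Fin M, b / M = b := by simp; field_simp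
  have e2 : ∑ _i : Fin N, b / N = b := by simp; field_simp
  rw [e1] at q1
  rw [e2] at q2
  rw [hS, ENNReal.ofReal_mul (Finset.sum_nonneg fun i _ => hu i),
    ENNReal.mul_rpow_of_ne_top ENNReal.ofReal_ne_top ENNReal.ofReal_ne_top]
  have hF' : ∀ i, F (w.1 i) = ENNReal.ofReal (w.1 i) ^ (-(b / M)) *
      ENNReal.ofReal (gam φU θU (w.1 i)) := fun i => Set.indicator_of_mem (hw.1.1 i) _
  have hG' : ∀ i, G (w.2 i) = ENNReal.ofReal (w.2 i) ^ (-(b / N)) *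
      ENNReal.ofReal (gam φV θV (w.2 i)) := fun i => Set.indicator_of_mem (hw.1.2 i) _
  simp only [hF', hG', Finset.prod_mul_distrib, prior]
  rw [mul_mul_mul_comm]
  gcongr

/-- The box `(0, η]^M × (0, η']^N` has prior mass of order `η ^ (M * φU) * η' ^ (N * φV)`, and the excess
there is at most `M * N * η * η'`. Shrinking only one of the two sides realises either argument of
the minimum `min (M * φU) (N * φV)`. -/
theorem zero_box (hM : 1 ≤ M) (hN : 1 ≤ N) (hφU : 0 < φU) (hθU : 0 < θU) (hφV : 0 < φV)
    (hθV : 0 < θV) : ∃ m : ℝ, 0 < m ∧ ∀ η η', 0 < η → η ≤ κ → 0 < η' → η' ≤ κ →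
    ENNReal.ofReal (m * (η ^ (M * φU) * η' ^ (N * φV))) ≤
    ∫⁻ w in {w ∈ blockDom (M := M) (N := N) κ (fun _ _ => 0) |
      0 < blockSum (fun _ _ => 0) w ∧ blockSum (fun _ _ => 0) w ≤ M * N * (η * η')},
      prior φU θU φV θV w := by
  obtain ⟨mU, hmU, hU⟩ := lintegral_gam_ge hφU hθU κ
  obtain ⟨mV, hmV, hV⟩ := lintegral_gam_ge hφV hθV κ
  refine ⟨mU ^ M * mV ^ N, by positivity, fun η η' hη hηκ hη' hηκ' => ?_⟩
  have mgU := measurable_gam φU θU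
  have mgV := measurable_gam φV θV
  have e0 : mU ^ M * mV ^ N * (η ^ (M * φU) * η' ^ (N * φV))
      = (mU * η ^ φU) ^ M * (mV * η' ^ φV) ^ N := by
    rw [mul_pow, mul_pow, ← Real.rpow_mul_natCast hη.le, ← Real.rpow_mul_natCast hη'.le,
      mul_comm φU, mul_comm φV]
    ring
  set F : ℝ → ENNReal := (Set.Ioc 0 η).indicator fun x => ENNReal.ofReal (gam φU θU x) with hF
  set G : ℝ → ENNReal := (Set.Ioc 0 η').indicator fun x => ENNReal.ofReal (gam φV θV x) with hG
  have mF : Measurable F := Measurable.indicator (by fun_prop) measurableSet_Ioc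
  have mG : Measurable G := Measurable.indicator (by fun_prop) measurableSet_Ioc
  have iF : ENNReal.ofReal (mU * η ^ φU) ≤ ∫⁻ x, F x := by
    rw [hF, lintegral_indicator measurableSet_Ioc]; exact hU η hη hηκ
  have iG : ENNReal.ofReal (mV * η' ^ φV) ≤ ∫⁻ x, G x := by
    rw [hG, lintegral_indicator measurableSet_Ioc]; exact hV η' hη' hηκ'
  have hlow : ENNReal.ofReal (mU ^ M * mV ^ N * (η ^ (M * φU) * η' ^ (N * φV))) ≤
      ∫⁻ w : (Fin M → ℝ) × (Fin N → ℝ), (∏ i, F (w.1 i)) * ∏ j, G (w.2 j) := by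
    rw [lintegral_prod_prod mF mG, e0, ENNReal.ofReal_mul (by positivity),
      ENNReal.ofReal_pow (by positivity), ENNReal.ofReal_pow (by positivity)]
    gcongr
  refine hlow.trans ?_
  have hms : MeasurableSet {w ∈ blockDom (M := M) (N := N) κ (fun _ _ => 0) |
      0 < blockSum (fun _ _ => 0) w ∧ blockSum (fun _ _ => 0) w ≤ M * N * (η * η')} :=
    (measurableSet_blockDom _ _).inter
      ((measurableSet_lt measurable_const (measurable_blockSum _)).inter
        (measurableSet_le (measurable_blockSum _) measurable_const))
  rw [← lintegral_indicator hms]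
  refine lintegral_mono fun w => ?_
  by_cases hw : (∀ i, w.1 i ∈ Set.Ioc 0 η) ∧ ∀ j, w.2 j ∈ Set.Ioc 0 η'
  · have hS : blockSum (fun _ _ => 0) w = ∑ i, ∑ j, w.1 i * w.2 j := by simp [blockSum]
    rw [Set.indicator_of_mem]
    · simp only [prior]
      gcongr with i _ j _
      · rw [hF, Set.indicator_of_mem (hw.1 i)]
      · rw [hG, Set.indicator_of_mem (hw.2 j)]
    · refine ⟨⟨⟨fun i => ⟨(hw.1 i).1.le, (hw.1 i).2.trans hηκ⟩,
        fun j => ⟨(hw.2 j).1.le, (hw.2 j).2.trans hηκ'⟩⟩, fun i j => ?_⟩, ?_, ?_⟩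
      · have := mul_pos (hw.1 i).1 (hw.2 j).1
        linarith
      · rw [hS]
        have : Nonempty (Fin M) := ⟨⟨0, hM⟩⟩
        have : Nonempty (Fin N) := ⟨⟨0, hN⟩⟩
        exact Finset.sum_pos (fun i _ => Finset.sum_pos
          (fun j _ => mul_pos (hw.1 i).1 (hw.2 j).1) univ_nonempty) univ_nonempty
      · rw [hS]
        have : ∑ _i : Fin M, ∑ _j : Fin N, η * η' = M * N * (η * η') := by
          simp; ring
        rw [← this]
        exact Finset.sum_le_sum fun i _ => Finset.sum_le_sum fun j _ =>
          mul_le_mul (hw.1 i).2 (hw.2 j).2 (hw.2 j).1.le hη.le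
  · refine le_of_eq_of_le ?_ zero_le
    rw [not_and_or] at hw
    push Not at hw
    rcases hw with ⟨i, hi⟩ | ⟨j, hj⟩
    · rw [Finset.prod_eq_zero (mem_univ i) (Set.indicator_of_notMem hi _), zero_mul]
    · rw [Finset.prod_eq_zero (mem_univ j) (Set.indicator_of_notMem hj _), mul_zero]

theorem hasExponent_zero (hM : 1 ≤ M) (hN : 1 ≤ N) (hφU : 0 < φU) (hθU : 0 < θU) (hφV : 0 < φV)
    (hθV : 0 < θV) (hκ : 0 < κ) :
    HasExponent (M := M) (N := N) φU θU φV θV κ (fun _ _ => 0) (min (M * φU) (N * φV)) := by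
  have hM' : (0 : ℝ) < M := by exact_mod_cast hM
  have hN' : (0 : ℝ) < N := by exact_mod_cast hN
  have ha : 0 < min (M * φU) (N * φV) := by positivity
  refine ⟨fun t ht ht1 => ?_, ?_⟩
  · have hlt : t * min (M * φU) (N * φV) < min (M * φU) (N * φV) := by nlinarith
    exact zero_upper hM hN hφU hθU hφV hθV _ (mul_pos ht ha) (hlt.trans_le (min_le_left _ _))
      (hlt.trans_le (min_le_right _ _))
  · obtain ⟨m, hm, h⟩ := zero_box (M := M) (N := N) (κ := κ) hM hN hφU hθU hφV hθV
    set r : ℝ := 1 / (M * N * κ) with hr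
    have hr0 : 0 < r := by positivity
    have hev : ∀ᶠ ε in nhdsWithin (0 : ℝ) (Set.Ioi 0), 0 < ε ∧ r * ε ≤ κ := by
      refine (eventually_mem_nhdsWithin).and ?_
      have : Filter.Tendsto (fun ε : ℝ => r * ε) (nhdsWithin 0 (Set.Ioi 0)) (nhds (r * 0)) :=
        (Continuous.tendsto (by fun_prop) _).mono_left nhdsWithin_le_nhds
      rw [mul_zero] at this
      exact (this.eventually_lt_const hκ).mono fun _ h => h.le
    rcases le_total (M * φU) (N * φV) with hle | hle
    · rw [min_eq_left hle]
      refine ⟨m * (r ^ (M * φU) * κ ^ (N * φV)), by positivity, hev.mono fun ε hε => ?_⟩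
      have := h (r * ε) κ (by have := hε.1; positivity) hε.2 hκ le_rfl
      have e : M * N * (r * ε * κ) = ε := by rw [hr]; field_simp
      rw [e, Real.mul_rpow hr0.le hε.1.le] at this
      convert this using 2
      ring
    · rw [min_eq_right hle]
      refine ⟨m * (κ ^ (M * φU) * r ^ (N * φV)), by positivity, hev.mono fun ε hε => ?_⟩
      have := h κ (r * ε) hκ le_rfl (by have := hε.1; positivity) hε.2
      have e : M * N * (κ * (r * ε)) = ε := by rw [hr]; field_simp
      rw [e, Real.mul_rpow hr0.le hε.1.le] at this
      convert this using 2
      ring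

end zero


/-! ### The block with positive rank-one target -/

/-- If `y` lies within `l * ε` above `c * (1 + ε) / x`, then `x * y` lies in the relative shell
`(1 + ε, 1 + 2 * ε)` above `c`. -/
theorem shell_bounds {x y c ε κ l : ℝ} (hx : 0 < x) (hxκ : x ≤ κ) (hε : 0 < ε) (hl : 0 < l)
    (hlc : l * κ ≤ c) (hy : y - c * (1 + ε) / x ∈ Set.Ioo 0 (l * ε)) :
    c * (1 + ε) < x * y ∧ x * y < c * (1 + 2 * ε) := by
  have h1 : c * (1 + ε) / x < y := by linarith [hy.1]
  have h2 : y < c * (1 + ε) / x + l * ε := by linarith [hy.2]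
  refine ⟨by rw [div_lt_iff₀ hx] at h1; linarith, ?_⟩
  have h3 : x * y < x * (c * (1 + ε) / x + l * ε) := mul_lt_mul_of_pos_left h2 hx
  have h4 : x * (c * (1 + ε) / x + l * ε) = c * (1 + ε) + x * l * ε := by field_simp
  have h5 : x * l ≤ c := by nlinarith
  have h6 : x * l * ε ≤ c * ε := mul_le_mul_of_nonneg_right h5 hε.le
  linarith

/-- Control of an off-cross entry `X = A * B / P` of a rank-one matrix from its pivot `P` and the two
entries `A`, `B` of the pivot column and row: if these lie in the shell `(1 + ε, 1 + 2 * ε)` above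
their targets, then `X` exceeds its own target by a relative amount at most `4 * ε`. The strict lower
bound holds because `1 + 2 * ε < (1 + ε) ^ 2`. -/
theorem cross_bounds {X P A B cX cP cA cB ε : ℝ} (hcX : 0 < cX) (hcP : 0 < cP) (hcA : 0 < cA)
    (hcB : 0 < cB) (hε : 0 < ε) (h : X * P = A * B) (hc : cX * cP = cA * cB)
    (hP : cP * (1 + ε) < P ∧ P < cP * (1 + 2 * ε)) (hA : cA * (1 + ε) < A ∧ A < cA * (1 + 2 * ε))
    (hB : cB * (1 + ε) < B ∧ B < cB * (1 + 2 * ε)) : cX < X ∧ X ≤ cX * (1 + 4 * ε) := by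
  have hA0 : 0 < cA * (1 + ε) := by positivity
  have hB0 : 0 < cB * (1 + ε) := by positivity
  have hP0 : 0 < P := lt_trans (by positivity) hP.1
  have l1 : cA * (1 + ε) * (cB * (1 + ε)) < A * B := mul_lt_mul'' hA.1 hB.1 hA0.le hB0.le
  have l2 : A * B < cA * (1 + 2 * ε) * (cB * (1 + 2 * ε)) :=
    mul_lt_mul'' hA.2 hB.2 (hA0.le.trans hA.1.le) (hB0.le.trans hB.1.le)
  have e1 : cA * (1 + ε) * (cB * (1 + ε)) = cX * cP * (1 + ε) ^ 2 := by rw [hc]; ring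
  have e2 : cA * (1 + 2 * ε) * (cB * (1 + 2 * ε)) = cX * cP * (1 + 2 * ε) ^ 2 := by rw [hc]; ring
  constructor
  · refine lt_of_mul_lt_mul_right ?_ hP0.le
    calc cX * P < cX * (cP * (1 + 2 * ε)) := mul_lt_mul_of_pos_left hP.2 hcX
      _ ≤ cX * cP * (1 + ε) ^ 2 := by
        rw [← mul_assoc]
        exact mul_le_mul_of_nonneg_left (by nlinarith) (by positivity)
      _ < X * P := by rw [h, ← e1]; exact l1
  · refine le_of_mul_le_mul_right ?_ hP0
    calc X * P ≤ cX * cP * (1 + 2 * ε) ^ 2 := by rw [h, ← e2]; exact l2.le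
      _ ≤ cX * cP * ((1 + 4 * ε) * (1 + ε)) :=
        mul_le_mul_of_nonneg_left (by nlinarith) (by positivity)
      _ = cX * (1 + 4 * ε) * (cP * (1 + ε)) := by ring
      _ ≤ cX * (1 + 4 * ε) * P := mul_le_mul_of_nonneg_left hP.1.le (by positivity)

theorem exists_lower {M N : ℕ} (hM : 1 ≤ M) (hN : 1 ≤ N) {κ : ℝ} (hκ : 0 < κ)
    {c : Fin M → Fin N → ℝ} (hc : ∀ i j, 0 < c i j) : ∃ l, 0 < l ∧ ∀ i j, l * κ ≤ c i j := by
  have : Nonempty (Fin M × Fin N) := ⟨(⟨0, hM⟩, ⟨0, hN⟩)⟩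
  obtain ⟨p, hp⟩ := Finite.exists_min fun p : Fin M × Fin N => c p.1 p.2
  refine ⟨c p.1 p.2 / κ, div_pos (hc _ _) hκ, fun i j => ?_⟩
  rw [div_mul_cancel₀ _ hκ.ne']
  exact hp (i, j)

/-- A positive lower bound on the target keeps all coordinates of the block away from `0`, since
`u i * κ ≥ u i * v j ≥ c i j`. -/
theorem mem_Icc_of_blockDom {M N : ℕ} (hM : 1 ≤ M) (hN : 1 ≤ N) {κ l : ℝ} (hκ : 0 < κ)
    {c : Fin M → Fin N → ℝ} (hl : ∀ i j, l * κ ≤ c i j) {w : (Fin M → ℝ) × (Fin N → ℝ)}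
    (hw : w ∈ blockDom κ c) : (∀ i, w.1 i ∈ Set.Icc l κ) ∧ ∀ j, w.2 j ∈ Set.Icc l κ := by
  constructor
  · refine fun i => ⟨?_, (hw.1.1 i).2⟩
    refine le_of_mul_le_mul_right ?_ hκ
    have h1 := hw.2 i ⟨0, hN⟩
    have h2 := hl i ⟨0, hN⟩
    have h3 := mul_le_mul_of_nonneg_left (hw.1.2 ⟨0, hN⟩).2 (hw.1.1 i).1
    linarith
  · refine fun j => ⟨?_, (hw.1.2 j).2⟩
    refine le_of_mul_le_mul_right ?_ hκ
    have h1 := hw.2 ⟨0, hM⟩ j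
    have h2 := hl ⟨0, hM⟩ j
    have h3 := mul_le_mul_of_nonneg_right (hw.1.1 ⟨0, hM⟩).2 (hw.1.2 j).1
    linarith

section pos
variable {M N : ℕ} {φU θU φV θV κ : ℝ}

/-- The excess dominates each of the `M + N - 1` entries in the pivot row and column, so its power `-b`
splits into `M + N - 1` factors of order `b / (M + N - 1) < 1`, which are made independent by
`lintegral_pivot`; the prior is bounded on this block. -/
theorem pos_upper (hM : 1 ≤ M) (hN : 1 ≤ N) (hφU : 0 < φU) (hθU : 0 < θU) (hφV : 0 < φV)
    (hθV : 0 < θV) (hκ : 0 < κ) {c : Fin M → Fin N → ℝ} (hc : ∀ i j, 0 < c i j) (b : ℝ)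
    (hb : 0 < b) (hb' : b < (M : ℝ) + N - 1) :
    ∫⁻ w in blockDom κ c,
      ENNReal.ofReal (blockSum c w) ^ (-b) * prior φU θU φV θV w ≠ ⊤ := by
  obtain ⟨l, hl, hlc⟩ := exists_lower hM hN hκ hc
  obtain ⟨_, CU, _, hCU⟩ := gam_bounds (φ := φU) (θ := θU) (κ := κ) hφU hθU hl
  obtain ⟨_, CV, _, hCV⟩ := gam_bounds (φ := φV) (θ := θV) (κ := κ) hφV hθV hl
  set i₀ : Fin M := ⟨0, hM⟩
  set j₀ : Fin N := ⟨0, hN⟩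
  have hpos : (0 : ℝ) < (M : ℝ) + N - 1 := hb.trans hb'
  set β : ℝ := b / ((M : ℝ) + N - 1) with hβ
  have hβ0 : 0 < β := by positivity
  have hβ1 : β < 1 := (div_lt_one hpos).2 hb'
  set q : ℝ → ENNReal := fun y => ENNReal.ofReal l ^ (-β) *
    (Set.Icc 0 κ).indicator (fun y => ENNReal.ofReal y ^ (-β)) y with hq
  have mq : Measurable q :=
    (Measurable.indicator (by fun_prop) measurableSet_Icc).const_mul _
  have iq : ∫⁻ y, q y ≠ ⊤ := by
    rw [hq, lintegral_const_mul _ (Measurable.indicator (by fun_prop) measurableSet_Icc),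
      lintegral_indicator measurableSet_Icc]
    refine ENNReal.mul_ne_top ?_ ?_
    · rw [ENNReal.ofReal_rpow_of_pos hl]; exact ENNReal.ofReal_ne_top
    · have := lintegral_rpow_ne_top κ β 0 (by linarith)
      simpa using this
  set α : ℝ → ENNReal := (Set.Icc 0 κ).indicator 1 with hα
  have mα : Measurable α := measurable_one.indicator measurableSet_Icc
  have iα : ∫⁻ x, α x ≠ ⊤ := by
    rw [hα, lintegral_indicator_one measurableSet_Icc]; simp
  have hpiv := lintegral_pivot i₀ j₀ α (fun _ => q) (fun _ => q) (fun i => c i j₀)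
    (fun j => c i₀ j) mα (fun _ => mq) (fun _ => mq)
  have hfin : ∫⁻ w : (Fin M → ℝ) × (Fin N → ℝ), α (w.1 i₀) *
      (∏ j, q (w.2 j - c i₀ j / w.1 i₀)) * ∏ i ∈ univ.erase i₀, q (w.1 i - c i j₀ / w.2 j₀) ≠ ⊤ := by
    rw [hpiv]
    exact ENNReal.mul_ne_top (ENNReal.mul_ne_top iα (ENNReal.prod_ne_top fun _ _ => iq))
      (ENNReal.prod_ne_top fun _ _ => iq)
  have hfin2 := ENNReal.mul_ne_top hfin (b := ENNReal.ofReal CU ^ M * ENNReal.ofReal CV ^ N)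
    (ENNReal.mul_ne_top (ENNReal.pow_ne_top ENNReal.ofReal_ne_top)
      (ENNReal.pow_ne_top ENNReal.ofReal_ne_top))
  rw [← lintegral_mul_const' _ _ (ENNReal.mul_ne_top (ENNReal.pow_ne_top ENNReal.ofReal_ne_top)
      (ENNReal.pow_ne_top ENNReal.ofReal_ne_top))] at hfin2
  refine ne_top_of_le_ne_top hfin2 (le_trans ?_ (setLIntegral_le_lintegral (blockDom κ c) _))
  refine setLIntegral_mono' (measurableSet_blockDom _ _) fun w hw => ?_
  obtain ⟨hu, hv⟩ := mem_Icc_of_blockDom hM hN hκ hlc hw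
  refine mul_le_mul' ?_ ?_
  · have hα1 : α (w.1 i₀) = 1 := by rw [hα, Set.indicator_of_mem (hw.1.1 i₀)]; rfl
    rw [hα1, one_mul]
    have key : ∀ x y c', x ∈ Set.Icc l κ → y ∈ Set.Icc l κ → 0 < c' → 0 ≤ x * y - c' →
        ENNReal.ofReal (x * y - c') ^ (-β) ≤ q (y - c' / x) := by
      intro x y c' hx hy hc' hxy
      have hx0 : 0 < x := hl.trans_le hx.1
      have hd : 0 < c' / x := by positivity
      have e : x * y - c' = x * (y - c' / x) := by field_simp
      have hy0 : 0 ≤ y - c' / x := by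
        rw [e] at hxy
        exact nonneg_of_mul_nonneg_right hxy hx0
      have : q (y - c' / x) = ENNReal.ofReal l ^ (-β) * ENNReal.ofReal (y - c' / x) ^ (-β) := by
        rw [hq]
        simp only
        rw [Set.indicator_of_mem]
        exact ⟨hy0, by linarith [hy.2]⟩
      rw [this, ← ENNReal.mul_rpow_of_ne_top ENNReal.ofReal_ne_top ENNReal.ofReal_ne_top,
        ← ENNReal.ofReal_mul hl.le, ENNReal.rpow_neg, ENNReal.rpow_neg, e]
      refine ENNReal.inv_le_inv.2 (ENNReal.rpow_le_rpow (ENNReal.ofReal_le_ofReal ?_) hβ0.le)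
      exact mul_le_mul_of_nonneg_right hx.1 hy0
    have hQ := rpow_neg_sum_le ((univ.erase i₀).disjSum (univ : Finset (Fin N)))
      ⟨Sum.inr j₀, by simp⟩ (blockSum c w)
      (Sum.elim (fun i => w.1 i * w.2 j₀ - c i j₀) (fun j => w.1 i₀ * w.2 j - c i₀ j))
      (fun _ => β) (fun _ _ => hβ0) (by
        rintro (i | j) -
        · exact le_blockSum hw i j₀
        · exact le_blockSum hw i₀ j)
    have hs : ∑ _i ∈ (univ.erase i₀).disjSum (univ : Finset (Fin N)), β = b := by
      rw [Finset.sum_const, Finset.card_disjSum, Finset.card_erase_of_mem (mem_univ _)]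
      simp only [Finset.card_univ, Fintype.card_fin, nsmul_eq_mul]
      push_cast [Nat.cast_sub hM]
      rw [hβ]
      field_simp
      ring
    rw [hs, Finset.prod_disjSum] at hQ
    refine hQ.trans ?_
    rw [mul_comm]
    refine mul_le_mul' (Finset.prod_le_prod' fun j _ => ?_) (Finset.prod_le_prod' fun i _ => ?_)
    · exact key _ _ _ (hu i₀) (hv j) (hc _ _) (hw.2 i₀ j)
    · have := hw.2 i j₀
      simp only [Sum.elim_inl]
      rw [mul_comm] at this ⊢
      exact key _ _ _ (hv j₀) (hu i) (hc _ _) this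
  · unfold prior
    refine mul_le_mul' ?_ ?_
    · refine (Finset.prod_le_prod' fun i _ => ENNReal.ofReal_le_ofReal (hCU _ (hu i)).2).trans ?_
      simp
    · refine (Finset.prod_le_prod' fun i _ => ENNReal.ofReal_le_ofReal (hCV _ (hv i)).2).trans ?_
      simp

/-- Room inside the cube: `R` is the factor by which the pivot coordinate may grow. -/
theorem exists_ratio {M N : ℕ} {u₀ : Fin M → ℝ} {v₀ : Fin N → ℝ} (hu : ∀ i, u₀ i ∈ Set.Ioo 0 κ)
    (hv : ∀ j, v₀ j ∈ Set.Ioo 0 κ) :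
    ∃ R : ℝ, 1 < R ∧ (∀ i, u₀ i * R * R ≤ κ) ∧ ∀ j, v₀ j * R ≤ κ := by
  have h1 : ∀ i, ∀ᶠ R in nhdsWithin (1 : ℝ) (Set.Ioi 1), u₀ i * R * R ≤ κ := fun i => by
    have : Filter.Tendsto (fun R : ℝ => u₀ i * R * R) (nhdsWithin 1 (Set.Ioi 1))
        (nhds (u₀ i * 1 * 1)) :=
      (Continuous.tendsto (by fun_prop) _).mono_left nhdsWithin_le_nhds
    exact (this.eventually_lt_const (by simpa using (hu i).2)).mono fun _ h => h.le
  have h2 : ∀ j, ∀ᶠ R in nhdsWithin (1 : ℝ) (Set.Ioi 1), v₀ j * R ≤ κ := fun j => by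
    have : Filter.Tendsto (fun R : ℝ => v₀ j * R) (nhdsWithin 1 (Set.Ioi 1))
        (nhds (v₀ j * 1)) :=
      (Continuous.tendsto (by fun_prop) _).mono_left nhdsWithin_le_nhds
    exact (this.eventually_lt_const (by simpa using (hv j).2)).mono fun _ h => h.le
  exact ((eventually_mem_nhdsWithin (a := (1 : ℝ)) (s := Set.Ioi 1)).and
    ((Filter.eventually_all.2 h1).and (Filter.eventually_all.2 h2))).exists

/-- Let the `M + N - 1` entries of the pivot row and column range over the shells
`(1 + ε, 1 + 2 * ε)` above their targets, while the pivot coordinate itself ranges over an interval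
independent of `ε`. By `cross_bounds` every entry then exceeds its target by `O(ε)`, and by
`lintegral_pivot` the set has volume of order `ε ^ (M + N - 1)`. -/
theorem pos_box (hM : 1 ≤ M) (hN : 1 ≤ N) (hφU : 0 < φU) (hθU : 0 < θU) (hφV : 0 < φV)
    (hθV : 0 < θV) (hκ : 0 < κ) {u₀ : Fin M → ℝ} {v₀ : Fin N → ℝ} (hu₀ : ∀ i, u₀ i ∈ Set.Ioo 0 κ)
    (hv₀ : ∀ j, v₀ j ∈ Set.Ioo 0 κ) :
    ∃ m : ℝ, 0 < m ∧ ∃ ε₀ : ℝ, 0 < ε₀ ∧ ∀ ε, 0 < ε → ε ≤ ε₀ →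
    ENNReal.ofReal (m * ε ^ (N + (M - 1))) ≤
    ∫⁻ w in {w ∈ blockDom κ (fun i j => u₀ i * v₀ j) |
      0 < blockSum (fun i j => u₀ i * v₀ j) w ∧
      blockSum (fun i j => u₀ i * v₀ j) w ≤ M * N * (4 * κ ^ 2) * ε},
      prior φU θU φV θV w := by
  have hc : ∀ i j, 0 < u₀ i * v₀ j := fun i j => mul_pos (hu₀ i).1 (hv₀ j).1
  obtain ⟨l, hl, hlc⟩ := exists_lower hM hN hκ hc
  obtain ⟨mU, _, hmU, hU⟩ := gam_bounds (φ := φU) (θ := θU) (κ := κ) hφU hθU hl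
  obtain ⟨mV, _, hmV, hV⟩ := gam_bounds (φ := φV) (θ := θV) (κ := κ) hφV hθV hl
  obtain ⟨R, hR, hRu, hRv⟩ := exists_ratio hu₀ hv₀
  set i₀ : Fin M := ⟨0, hM⟩
  set j₀ : Fin N := ⟨0, hN⟩
  have hui := (hu₀ i₀).1
  refine ⟨(R - 1) * u₀ i₀ * l ^ (N + (M - 1)) * (mU ^ M * mV ^ N), ?_, (R - 1) / 2,
    by linarith, fun ε hε hεR => ?_⟩
  · have : 0 < R - 1 := by linarith
    positivity
  set q : ℝ → ENNReal := (Set.Ioo 0 (l * ε)).indicator 1 with hq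
  have mq : Measurable q := measurable_one.indicator measurableSet_Ioo
  have iq : ∫⁻ y, q y = ENNReal.ofReal (l * ε) := by
    rw [hq, lintegral_indicator_one measurableSet_Ioo]; simp
  set α : ℝ → ENNReal := (Set.Ioo (u₀ i₀) (R * u₀ i₀)).indicator 1 with hα
  have mα : Measurable α := measurable_one.indicator measurableSet_Ioo
  have iα : ∫⁻ x, α x = ENNReal.ofReal ((R - 1) * u₀ i₀) := by
    rw [hα, lintegral_indicator_one measurableSet_Ioo, Real.volume_Ioo]
    congr 1; ring
  have hpiv := lintegral_pivot i₀ j₀ α (fun _ => q) (fun _ => q)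
    (fun i => u₀ i * v₀ j₀ * (1 + ε)) (fun j => u₀ i₀ * v₀ j * (1 + ε)) mα (fun _ => mq)
    (fun _ => mq)
  have hR0 : 0 < R - 1 := by linarith
  have hval : ENNReal.ofReal ((R - 1) * u₀ i₀ * l ^ (N + (M - 1)) * (mU ^ M * mV ^ N) *
      ε ^ (N + (M - 1))) = (∫⁻ w : (Fin M → ℝ) × (Fin N → ℝ), α (w.1 i₀) *
      (∏ j, q (w.2 j - u₀ i₀ * v₀ j * (1 + ε) / w.1 i₀)) *
      ∏ i ∈ univ.erase i₀, q (w.1 i - u₀ i * v₀ j₀ * (1 + ε) / w.2 j₀)) *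
      (ENNReal.ofReal mU ^ M * ENNReal.ofReal mV ^ N) := by
    rw [hpiv, iα]
    simp only [iq, Finset.prod_const, Finset.card_univ, Fintype.card_fin,
      Finset.card_erase_of_mem (mem_univ i₀)]
    rw [← ENNReal.ofReal_pow (by positivity), ← ENNReal.ofReal_pow (by positivity),
      ← ENNReal.ofReal_pow (by positivity), ← ENNReal.ofReal_pow (by positivity),
      ← ENNReal.ofReal_mul (by positivity), ← ENNReal.ofReal_mul (by positivity),
      ← ENNReal.ofReal_mul (by positivity), ← ENNReal.ofReal_mul (by positivity)]
    congr 1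
    ring
  rw [hval, ← lintegral_mul_const' _ _ (ENNReal.mul_ne_top
      (ENNReal.pow_ne_top ENNReal.ofReal_ne_top) (ENNReal.pow_ne_top ENNReal.ofReal_ne_top))]
  have hms : MeasurableSet {w ∈ blockDom κ (fun i j => u₀ i * v₀ j) |
      0 < blockSum (fun i j => u₀ i * v₀ j) w ∧
      blockSum (fun i j => u₀ i * v₀ j) w ≤ M * N * (4 * κ ^ 2) * ε} :=
    (measurableSet_blockDom _ _).inter
      ((measurableSet_lt measurable_const (measurable_blockSum _)).inter
        (measurableSet_le (measurable_blockSum _) measurable_const))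
  rw [← lintegral_indicator hms]
  refine lintegral_mono fun w => ?_
  by_cases hw : w.1 i₀ ∈ Set.Ioo (u₀ i₀) (R * u₀ i₀) ∧
      (∀ j, w.2 j - u₀ i₀ * v₀ j * (1 + ε) / w.1 i₀ ∈ Set.Ioo 0 (l * ε)) ∧
      ∀ i ≠ i₀, w.1 i - u₀ i * v₀ j₀ * (1 + ε) / w.2 j₀ ∈ Set.Ioo 0 (l * ε)
  · obtain ⟨ha, hb, hd⟩ := hw
    have hx0 : 0 < w.1 i₀ := hui.trans ha.1
    have hxκ : w.1 i₀ ≤ κ := by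
      have := hRu i₀
      nlinarith [ha.2]
    have hB : ∀ j, u₀ i₀ * v₀ j * (1 + ε) < w.1 i₀ * w.2 j ∧
        w.1 i₀ * w.2 j < u₀ i₀ * v₀ j * (1 + 2 * ε) := fun j =>
      shell_bounds hx0 hxκ hε hl (hlc i₀ j) (hb j)
    have hv0 : ∀ j, 0 < w.2 j := fun j => by
      have h1 := (hB j).1
      have h2 := hc i₀ j
      exact pos_of_mul_pos_right (lt_trans (by positivity) h1) hx0.le
    have hvκ : ∀ j, w.2 j ≤ κ := fun j => by
      refine le_trans ?_ (hRv j)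
      refine le_of_mul_le_mul_left ?_ hui
      have h1 := (hB j).2
      have h2 : u₀ i₀ * w.2 j ≤ w.1 i₀ * w.2 j := mul_le_mul_of_nonneg_right ha.1.le (hv0 j).le
      have h3 : u₀ i₀ * v₀ j * (1 + 2 * ε) ≤ u₀ i₀ * v₀ j * R :=
        mul_le_mul_of_nonneg_left (by linarith) (hc i₀ j).le
      linarith
    have hA : ∀ i, u₀ i * v₀ j₀ * (1 + ε) < w.1 i * w.2 j₀ ∧
        w.1 i * w.2 j₀ < u₀ i * v₀ j₀ * (1 + 2 * ε) := fun i => by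
      by_cases hi : i = i₀
      · rw [hi]; exact hB j₀
      · rw [mul_comm (w.1 i)]
        exact shell_bounds (hv0 j₀) (hvκ j₀) hε hl (hlc i j₀) (hd i hi)
    have hu0 : ∀ i, 0 < w.1 i := fun i => by
      have h1 := (hA i).1
      have h2 := hc i j₀
      exact pos_of_mul_pos_left (lt_trans (by positivity) h1) (hv0 j₀).le
    have huκ : ∀ i, w.1 i ≤ κ := fun i => by
      refine le_trans ?_ (hRu i)
      -- bounding `u i` means bounding `v j₀` from below, and `u i₀ < R * u₀ i₀` gives `v₀ j₀ < R * v j₀`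
      have h1 := (hA i).2
      have h2 := (hB j₀).1
      have hv00 := (hv₀ j₀).1
      have hui' := (hu₀ i).1
      have h3 : v₀ j₀ < R * w.2 j₀ := by
        refine lt_of_mul_lt_mul_left ?_ hui.le
        have : w.1 i₀ * w.2 j₀ < R * u₀ i₀ * w.2 j₀ := mul_lt_mul_of_pos_right ha.2 (hv0 j₀)
        nlinarith [hc i₀ j₀]
      refine le_of_mul_le_mul_right ?_ (hv0 j₀)
      calc w.1 i * w.2 j₀ ≤ u₀ i * v₀ j₀ * R :=
            h1.le.trans (mul_le_mul_of_nonneg_left (by linarith) (hc i j₀).le)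
        _ ≤ u₀ i * (R * w.2 j₀) * R := by gcongr
        _ = u₀ i * R * R * w.2 j₀ := by ring
    have hX : ∀ i j, u₀ i * v₀ j < w.1 i * w.2 j ∧
        w.1 i * w.2 j ≤ u₀ i * v₀ j * (1 + 4 * ε) := fun i j =>
      cross_bounds (hc i j) (hc i₀ j₀) (hc i j₀) (hc i₀ j) hε (by ring) (by ring)
        (hB j₀) (hA i) (hB j)
    have hwd : w ∈ blockDom κ (fun i j => u₀ i * v₀ j) :=
      ⟨⟨fun i => ⟨(hu0 i).le, huκ i⟩, fun j => ⟨(hv0 j).le, hvκ j⟩⟩, fun i j => by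
        have := (hX i j).1; linarith⟩
    obtain ⟨hu, hv⟩ := mem_Icc_of_blockDom hM hN hκ hlc hwd
    rw [Set.indicator_of_mem (show w ∈ {w ∈ blockDom κ (fun i j => u₀ i * v₀ j) |
      0 < blockSum (fun i j => u₀ i * v₀ j) w ∧
      blockSum (fun i j => u₀ i * v₀ j) w ≤ M * N * (4 * κ ^ 2) * ε} from ⟨hwd, ?_, ?_⟩)]
    · have q1 : ∀ y, q y ≤ 1 := fun y => Set.indicator_le_self' (by simp) y
      have a1 : α (w.1 i₀) ≤ 1 := Set.indicator_le_self' (by simp) _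
      have h1 : α (w.1 i₀) * (∏ j, q (w.2 j - u₀ i₀ * v₀ j * (1 + ε) / w.1 i₀)) *
          ∏ i ∈ univ.erase i₀, q (w.1 i - u₀ i * v₀ j₀ * (1 + ε) / w.2 j₀) ≤ 1 :=
        mul_le_one' (mul_le_one' a1 (Finset.prod_le_one' fun _ _ => q1 _))
          (Finset.prod_le_one' fun _ _ => q1 _)
      refine (mul_le_mul' h1 le_rfl).trans ?_
      rw [one_mul]
      unfold prior
      refine mul_le_mul' ?_ ?_
      · refine le_trans ?_
          (Finset.prod_le_prod' fun i _ => ENNReal.ofReal_le_ofReal (hU _ (hu i)).1)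
        simp
      · refine le_trans ?_
          (Finset.prod_le_prod' fun i _ => ENNReal.ofReal_le_ofReal (hV _ (hv i)).1)
        simp
    · exact (sub_pos.2 (hX i₀ j₀).1).trans_le (le_blockSum hwd i₀ j₀)
    · have : ∑ _i : Fin M, ∑ _j : Fin N, 4 * κ ^ 2 * ε = M * N * (4 * κ ^ 2) * ε := by
        simp; ring
      rw [← this]
      refine Finset.sum_le_sum fun i _ => Finset.sum_le_sum fun j _ => ?_
      have h1 := (hX i j).2
      have h2 : u₀ i * v₀ j ≤ κ * κ :=
        mul_le_mul (hu₀ i).2.le (hv₀ j).2.le (hv₀ j).1.le hκ.le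
      nlinarith
  · refine le_of_eq_of_le ?_ zero_le
    rw [not_and_or, not_and_or] at hw
    push Not at hw
    rcases hw with h | ⟨j, hj⟩ | ⟨i, hi, hi'⟩
    · simp only [hα, Set.indicator_of_notMem h, zero_mul]
    · rw [Finset.prod_eq_zero (mem_univ j) (Set.indicator_of_notMem hj _), mul_zero, zero_mul,
        zero_mul]
    · rw [Finset.prod_eq_zero (Finset.mem_erase.2 ⟨hi, mem_univ i⟩)
        (Set.indicator_of_notMem hi' _), mul_zero, zero_mul]

theorem hasExponent_pos (hM : 1 ≤ M) (hN : 1 ≤ N) (hφU : 0 < φU) (hθU : 0 < θU) (hφV : 0 < φV)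
    (hθV : 0 < θV) (hκ : 0 < κ) {u₀ : Fin M → ℝ} {v₀ : Fin N → ℝ} (hu₀ : ∀ i, u₀ i ∈ Set.Ioo 0 κ)
    (hv₀ : ∀ j, v₀ j ∈ Set.Ioo 0 κ) :
    HasExponent φU θU φV θV κ (fun i j => u₀ i * v₀ j) ((M : ℝ) + N - 1) := by
  have hM' : (1 : ℝ) ≤ M := by exact_mod_cast hM
  have hN' : (1 : ℝ) ≤ N := by exact_mod_cast hN
  have ha : 0 < (M : ℝ) + N - 1 := by linarith
  refine ⟨fun t ht ht1 => ?_, ?_⟩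
  · exact pos_upper hM hN hφU hθU hφV hθV hκ (fun i j => mul_pos (hu₀ i).1 (hv₀ j).1) _
      (mul_pos ht ha) (by nlinarith)
  · obtain ⟨m, hm, ε₀, hε₀, h⟩ := pos_box hM hN hφU hθU hφV hθV hκ hu₀ hv₀
    set r : ℝ := 1 / (M * N * (4 * κ ^ 2)) with hr
    have hr0 : 0 < r := by positivity
    have hev : ∀ᶠ ε in nhdsWithin (0 : ℝ) (Set.Ioi 0), 0 < ε ∧ r * ε ≤ ε₀ := by
      refine (eventually_mem_nhdsWithin).and ?_
      have : Filter.Tendsto (fun ε : ℝ => r * ε) (nhdsWithin 0 (Set.Ioi 0)) (nhds (r * 0)) :=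
        (Continuous.tendsto (by fun_prop) _).mono_left nhdsWithin_le_nhds
      rw [mul_zero] at this
      exact (this.eventually_lt_const hε₀).mono fun _ h => h.le
    refine ⟨m * r ^ (N + (M - 1)), by positivity, hev.mono fun ε hε => ?_⟩
    have := h (r * ε) (by have := hε.1; positivity) hε.2
    have e : M * N * (4 * κ ^ 2) * (r * ε) = ε := by rw [hr]; field_simp
    rw [e] at this
    have e2 : (M : ℝ) + N - 1 = ((N + (M - 1) : ℕ) : ℝ) := by
      push_cast [Nat.cast_sub hM]; ring
    rw [e2, Real.rpow_natCast]
    convert this using 2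
    ring

end pos


/-! ### From blocks to the full factorisation -/

theorem sum_sq_le_sq_sum {M N : ℕ} {F : Fin M → Fin N → ℝ} (hF : ∀ i j, 0 ≤ F i j) :
    ∑ i, ∑ j, F i j ^ 2 ≤ (∑ i, ∑ j, F i j) ^ 2 := by
  have h := Finset.sum_sq_le_sq_sum_of_nonneg (s := (univ : Finset (Fin M × Fin N)))
    (f := fun q => F q.1 q.2) (fun q _ => hF _ _)
  rwa [Fintype.sum_prod_type' (fun i j => F i j ^ 2), Fintype.sum_prod_type' F] at h

theorem sq_sum_le_mul_sum_sq {M N : ℕ} (F : Fin M → Fin N → ℝ) :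
    (∑ i, ∑ j, F i j) ^ 2 ≤ (M * N : ℝ) * ∑ i, ∑ j, F i j ^ 2 := by
  have h := sq_sum_le_card_mul_sum_sq (s := (univ : Finset (Fin M × Fin N)))
    (f := fun q => F q.1 q.2)
  rw [Fintype.sum_prod_type' (fun i j => F i j ^ 2), Fintype.sum_prod_type' F] at h
  simpa using h

/-- Comparison of the loss `K` with the total excess `Z`. The factor `B ^ (s' - s)` allows `s` to be
replaced by a larger exponent, which also covers `s < 0`. -/
theorem rpow_upper {K Z B n s s' : ℝ} (hZ : 0 < Z) (hK : 0 < K) (hKB : K ≤ B) (hn : 0 < n)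
    (hZK : Z ^ 2 ≤ n * K) (hs : s ≤ s') (hs' : 0 ≤ s') :
    K ^ (-s) ≤ B ^ (s' - s) * n ^ s' * Z ^ (-(2 * s')) := by
  have h1 : K ^ (-s) = K ^ (s' - s) * K ^ (-s') := by
    rw [← Real.rpow_add hK]; congr 1; ring
  have h2 : K ^ (s' - s) ≤ B ^ (s' - s) := Real.rpow_le_rpow hK.le hKB (by linarith)
  have h3 : Z ^ 2 / n ≤ K := by rw [div_le_iff₀ hn]; linarith
  have h4 : K ^ (-s') ≤ (Z ^ 2 / n) ^ (-s') :=
    Real.rpow_le_rpow_of_nonpos (by positivity) h3 (by linarith)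
  have h5 : (Z ^ 2 / n) ^ (-s') = n ^ s' * Z ^ (-(2 * s')) := by
    rw [Real.div_rpow (by positivity) hn.le, ← Real.rpow_natCast Z 2, ← Real.rpow_mul hZ.le,
      Real.rpow_neg hn.le, div_inv_eq_mul, mul_comm]
    congr 2; push_cast; ring
  rw [h1, mul_assoc, ← h5]
  exact mul_le_mul h2 h4 (Real.rpow_nonneg hK.le _) (Real.rpow_nonneg (hK.le.trans hKB) _)

section assembly
variable {M N H : ℕ}

/-- The region of all pairs `(U, V)` satisfying the sign condition, for a family `c` of targets. -/
def prodDom (κ : ℝ) (c : Fin H → Fin M → Fin N → ℝ) :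
    Set ((Fin M → Fin H → ℝ) × (Fin H → Fin N → ℝ)) :=
  {p | ((∀ i k, p.1 i k ∈ Set.Icc 0 κ) ∧ (∀ k j, p.2 k j ∈ Set.Icc 0 κ)) ∧
    ∀ i j k, 0 ≤ p.1 i k * p.2 k j - c k i j}

/-- The squared Frobenius loss, with the targets subtracted component by component. -/
def lossSum (c : Fin H → Fin M → Fin N → ℝ) (p : (Fin M → Fin H → ℝ) × (Fin H → Fin N → ℝ)) : ℝ :=
  ∑ i, ∑ j, (∑ k, (p.1 i k * p.2 k j - c k i j)) ^ 2

/-- The gamma prior density of the pair `(U, V)`. -/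
noncomputable def gamProd (φU θU φV θV : ℝ) (p : (Fin M → Fin H → ℝ) × (Fin H → Fin N → ℝ)) : ℝ :=
  (∏ i, ∏ k, gam φU θU (p.1 i k)) * ∏ k, ∏ j, gam φV θV (p.2 k j)

theorem mem_prodDom_iff {κ : ℝ} {c : Fin H → Fin M → Fin N → ℝ}
    {p : (Fin M → Fin H → ℝ) × (Fin H → Fin N → ℝ)} :
    p ∈ prodDom κ c ↔ ∀ k, ((fun i => p.1 i k, p.2 k) : (Fin M → ℝ) × (Fin N → ℝ))
      ∈ blockDom κ (c k) :=
  ⟨fun h k => ⟨⟨fun i => h.1.1 i k, fun j => h.1.2 k j⟩, fun i j => h.2 i j k⟩,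
    fun h => ⟨⟨fun i k => (h k).1.1 i, fun k j => (h k).1.2 j⟩, fun i j k => (h k).2 i j⟩⟩

theorem measurableSet_prodDom (κ : ℝ) (c : Fin H → Fin M → Fin N → ℝ) :
    MeasurableSet (prodDom κ c) := by
  have : prodDom κ c = ⋂ k, (fun p : (Fin M → Fin H → ℝ) × (Fin H → Fin N → ℝ) =>
      ((fun i => p.1 i k, p.2 k) : (Fin M → ℝ) × (Fin N → ℝ))) ⁻¹' blockDom κ (c k) := by
    ext p; simp only [Set.mem_iInter, Set.mem_preimage]; exact mem_prodDom_iff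
  rw [this]
  exact MeasurableSet.iInter fun k => (by fun_prop : Measurable _) (measurableSet_blockDom _ _)

theorem gamProd_nonneg {φU θU φV θV κ : ℝ} (hφU : 0 < φU) (hθU : 0 < θU) (hφV : 0 < φV)
    (hθV : 0 < θV) {c : Fin H → Fin M → Fin N → ℝ}
    {p : (Fin M → Fin H → ℝ) × (Fin H → Fin N → ℝ)} (hp : p ∈ prodDom κ c) :
    0 ≤ gamProd φU θU φV θV p :=
  mul_nonneg (prod_nonneg fun i _ => prod_nonneg fun k _ => gam_nonneg hφU hθU (hp.1.1 i k).1)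
    (prod_nonneg fun k _ => prod_nonneg fun j _ => gam_nonneg hφV hθV (hp.1.2 k j).1)

theorem ofReal_gamProd {φU θU φV θV κ : ℝ} (hφU : 0 < φU) (hθU : 0 < θU) (hφV : 0 < φV)
    (hθV : 0 < θV) {c : Fin H → Fin M → Fin N → ℝ}
    {p : (Fin M → Fin H → ℝ) × (Fin H → Fin N → ℝ)} (hp : p ∈ prodDom κ c) :
    ENNReal.ofReal (gamProd φU θU φV θV p) =
      ∏ k, prior φU θU φV θV ((fun i => p.1 i k, p.2 k) : (Fin M → ℝ) × (Fin N → ℝ)) := by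
  have hU := fun i k => gam_nonneg hφU hθU (hp.1.1 i k).1
  have hV := fun k j => gam_nonneg hφV hθV (hp.1.2 k j).1
  unfold gamProd prior
  rw [Finset.prod_comm, ← Finset.prod_mul_distrib,
    ENNReal.ofReal_prod_of_nonneg fun k _ => mul_nonneg (prod_nonneg fun i _ => hU i k)
      (prod_nonneg fun j _ => hV k j)]
  refine Finset.prod_congr rfl fun k _ => ?_
  rw [ENNReal.ofReal_mul (prod_nonneg fun i _ => hU i k),
    ENNReal.ofReal_prod_of_nonneg fun i _ => hU i k,
    ENNReal.ofReal_prod_of_nonneg fun j _ => hV k j]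

theorem sum_blockSum (c : Fin H → Fin M → Fin N → ℝ)
    (p : (Fin M → Fin H → ℝ) × (Fin H → Fin N → ℝ)) :
    ∑ i, ∑ j, ∑ k, (p.1 i k * p.2 k j - c k i j) =
      ∑ k, blockSum (c k) ((fun i => p.1 i k, p.2 k) : (Fin M → ℝ) × (Fin N → ℝ)) := by
  unfold blockSum
  rw [Finset.sum_comm]
  simp_rw [Finset.sum_comm (s := (univ : Finset (Fin M))) (t := (univ : Finset (Fin H)))]
  rw [Finset.sum_comm]
  refine Finset.sum_congr rfl fun k _ => Finset.sum_comm

/-- Finiteness below the critical exponent: with `Z` the sum of the block excesses `z k`, the loss power is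
bounded by a multiple of `Z ^ (-t * ∑ a k) ≤ ∏ z k ^ (-t * a k)` for some `t < 1`, and the block integrals are
finite. -/
theorem core_upper (hM : 1 ≤ M) (hN : 1 ≤ N) (hH : 1 ≤ H) {φU θU φV θV κ : ℝ} (hφU : 0 < φU)
    (hθU : 0 < θU) (hφV : 0 < φV) (hθV : 0 < θV) {c : Fin H → Fin M → Fin N → ℝ}
    {a : Fin H → ℝ} (ha : ∀ k, 0 < a k) (h : ∀ k, HasExponent φU θU φV θV κ (c k) (a k)) {s : ℝ}
    (hs : s < (∑ k, a k) / 2) :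
    ∫⁻ p in prodDom κ c, ENNReal.ofReal (lossSum c p ^ (-s) * gamProd φU θU φV θV p) ≠ ⊤ := by
  have hM' : (0 : ℝ) < M := by exact_mod_cast hM
  have hN' : (0 : ℝ) < N := by exact_mod_cast hN
  have : Nonempty (Fin H) := ⟨⟨0, hH⟩⟩
  have hA : 0 < ∑ k, a k := Finset.sum_pos (fun k _ => ha k) univ_nonempty
  set A := ∑ k, a k with hAdef
  -- `t < 1` with `s ≤ t * A / 2`, positive also when `s ≤ 0`
  obtain ⟨t, ht, ht1⟩ := exists_between (a₁ := max s 0 * 2 / A) (a₂ := 1) (by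
    rw [div_lt_one hA]
    rcases max_cases s 0 with ⟨e, _⟩ | ⟨e, _⟩ <;> rw [e] <;> linarith)
  have ht0 : 0 < t := lt_of_le_of_lt (by positivity) ht
  rw [div_lt_iff₀ hA] at ht
  have hst : s ≤ t * A / 2 := by linarith [le_max_left s 0]
  set B : ℝ := (∑ i, ∑ j, (∑ k, (κ * κ + |c k i j|)) ^ 2) + 1 with hB
  set C : ℝ := B ^ (t * A / 2 - s) * (M * N : ℝ) ^ (t * A / 2) with hC
  have hB0 : 0 < B := by positivity
  have hC0 : 0 ≤ C := by positivity
  have hfin : ∫⁻ p : (Fin M → Fin H → ℝ) × (Fin H → Fin N → ℝ),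
      ∏ k, (blockDom κ (c k)).indicator (fun w => ENNReal.ofReal (blockSum (c k) w) ^ (-(t * a k)) *
        prior φU θU φV θV w) ((fun i => p.1 i k, p.2 k) : (Fin M → ℝ) × (Fin N → ℝ)) ≠ ⊤ := by
    rw [lintegral_blocks M N H (fun k => (blockDom κ (c k)).indicator (fun w =>
      ENNReal.ofReal (blockSum (c k) w) ^ (-(t * a k)) * prior φU θU φV θV w)) (fun k =>
      Measurable.indicator (((measurable_blockSum _).ennreal_ofReal.pow_const _).mul
        (measurable_prior _ _ _ _)) (measurableSet_blockDom _ _))]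
    refine ENNReal.prod_ne_top fun k _ => ?_
    rw [lintegral_indicator (measurableSet_blockDom _ _)]
    exact (h k).upper t ht0 ht1
  refine ne_top_of_le_ne_top (ENNReal.mul_ne_top (ENNReal.ofReal_ne_top (r := C)) hfin) ?_
  rw [← lintegral_const_mul' _ _ ENNReal.ofReal_ne_top]
  refine le_trans ?_ (setLIntegral_le_lintegral (prodDom κ c) _)
  refine setLIntegral_mono' (measurableSet_prodDom _ _) fun p hp => ?_
  have hp' := mem_prodDom_iff.1 hp
  have hind : ∏ k, (blockDom κ (c k)).indicator (fun w =>
      ENNReal.ofReal (blockSum (c k) w) ^ (-(t * a k)) *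
        prior φU θU φV θV w) ((fun i => p.1 i k, p.2 k) : (Fin M → ℝ) × (Fin N → ℝ))
      = (∏ k, ENNReal.ofReal (blockSum (c k) (fun i => p.1 i k, p.2 k)) ^ (-(t * a k))) *
        ENNReal.ofReal (gamProd φU θU φV θV p) := by
    rw [ofReal_gamProd hφU hθU hφV hθV hp, ← Finset.prod_mul_distrib]
    exact Finset.prod_congr rfl fun k _ => Set.indicator_of_mem (hp' k) _
  rw [hind, ENNReal.ofReal_mul' (gamProd_nonneg hφU hθU hφV hθV hp), ← mul_assoc]
  refine mul_le_mul' ?_ le_rfl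
  set Z := ∑ k, blockSum (c k) ((fun i => p.1 i k, p.2 k) : (Fin M → ℝ) × (Fin N → ℝ)) with hZdef
  have hF : ∀ i j, 0 ≤ ∑ k, (p.1 i k * p.2 k j - c k i j) := fun i j =>
    Finset.sum_nonneg fun k _ => hp.2 i j k
  have hZ0 : 0 ≤ Z := Finset.sum_nonneg fun k _ => blockSum_nonneg (hp' k)
  have hprod := rpow_neg_sum_le univ univ_nonempty Z
    (fun k => blockSum (c k) ((fun i => p.1 i k, p.2 k) : (Fin M → ℝ) × (Fin N → ℝ)))
    (fun k => t * a k) (fun k _ => mul_pos ht0 (ha k))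
    (fun k hk => Finset.single_le_sum (fun k _ => blockSum_nonneg (hp' k)) hk)
  rw [← Finset.mul_sum, ← hAdef] at hprod
  have hKZ : lossSum c p ≤ Z ^ 2 := by
    rw [hZdef, ← sum_blockSum]; exact sum_sq_le_sq_sum hF
  have hZK : Z ^ 2 ≤ (M * N : ℝ) * lossSum c p := by
    rw [hZdef, ← sum_blockSum]; exact sq_sum_le_mul_sum_sq _
  rcases hZ0.eq_or_lt with hZ | hZ
  · -- at an exact factorisation the real power has a junk value, but the majorant is infinite
    have hP : ∏ k, ENNReal.ofReal (blockSum (c k) ((fun i => p.1 i k, p.2 k) :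
        (Fin M → ℝ) × (Fin N → ℝ))) ^ (-(t * a k)) = ⊤ := by
      rw [← hZ, ENNReal.ofReal_zero, ENNReal.zero_rpow_of_neg (by nlinarith)] at hprod
      exact top_le_iff.1 hprod
    rw [hP, ENNReal.mul_top]
    · exact le_top
    · have : 0 < C := by positivity
      simpa using this
  · have hK : 0 < lossSum c p := by
      have : 0 < Z ^ 2 := by positivity
      by_contra hcon
      have : (M * N : ℝ) * lossSum c p ≤ 0 :=
        mul_nonpos_of_nonneg_of_nonpos (by positivity) (not_lt.1 hcon)
      linarith
    have hKB : lossSum c p ≤ B := by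
      refine le_trans (Finset.sum_le_sum fun i _ => Finset.sum_le_sum fun j _ => ?_)
        (le_add_of_nonneg_right zero_le_one)
      refine pow_le_pow_left₀ (hF i j) (Finset.sum_le_sum fun k _ => ?_) 2
      have h1 : p.1 i k * p.2 k j ≤ κ * κ :=
        mul_le_mul (hp.1.1 i k).2 (hp.1.2 k j).2 (hp.1.2 k j).1
          ((hp.1.1 i k).1.trans (hp.1.1 i k).2)
      linarith [neg_abs_le (c k i j)]
    have hr := rpow_upper (s' := t * A / 2) hZ hK hKB (mul_pos hM' hN') hZK hst (by positivity)
    rw [show 2 * (t * A / 2) = t * A by ring] at hr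
    calc ENNReal.ofReal (lossSum c p ^ (-s)) ≤ ENNReal.ofReal (C * Z ^ (-(t * A))) :=
          ENNReal.ofReal_le_ofReal hr
      _ = ENNReal.ofReal C * ENNReal.ofReal Z ^ (-(t * A)) := by
          rw [ENNReal.ofReal_mul hC0, ENNReal.ofReal_rpow_of_pos hZ]
      _ ≤ _ := mul_le_mul' le_rfl hprod

/-- The part of `prodDom` on which the excess of every block lies in `(0, ε]`. -/
def prodShell (κ : ℝ) (c : Fin H → Fin M → Fin N → ℝ) (ε : ℝ) :
    Set ((Fin M → Fin H → ℝ) × (Fin H → Fin N → ℝ)) :=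
  {p | ∀ k, ((fun i => p.1 i k, p.2 k) : (Fin M → ℝ) × (Fin N → ℝ)) ∈
    {w ∈ blockDom κ (c k) | 0 < blockSum (c k) w ∧ blockSum (c k) w ≤ ε}}

theorem measurableSet_shell (κ ε : ℝ) (c : Fin M → Fin N → ℝ) :
    MeasurableSet {w ∈ blockDom κ c | 0 < blockSum c w ∧ blockSum c w ≤ ε} :=
  (measurableSet_blockDom _ _).inter ((measurableSet_lt measurable_const (measurable_blockSum _)).inter
    (measurableSet_le (measurable_blockSum _) measurable_const))

theorem measurableSet_prodShell (κ : ℝ) (c : Fin H → Fin M → Fin N → ℝ) (ε : ℝ) :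
    MeasurableSet (prodShell κ c ε) := by
  have : prodShell κ c ε = ⋂ k, (fun p : (Fin M → Fin H → ℝ) × (Fin H → Fin N → ℝ) =>
      ((fun i => p.1 i k, p.2 k) : (Fin M → ℝ) × (Fin N → ℝ))) ⁻¹'
      {w ∈ blockDom κ (c k) | 0 < blockSum (c k) w ∧ blockSum (c k) w ≤ ε} := by
    ext p; simp only [Set.mem_iInter, Set.mem_preimage]; rfl
  rw [this]
  exact MeasurableSet.iInter fun k => (by fun_prop : Measurable _) (measurableSet_shell _ _ _)

theorem prodShell_subset (κ : ℝ) (c : Fin H → Fin M → Fin N → ℝ) (ε : ℝ) :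
    prodShell κ c ε ⊆ prodDom κ c := fun _ hp => mem_prodDom_iff.2 fun k => (hp k).1

theorem prodShell_mass {φU θU φV θV κ : ℝ} (hφU : 0 < φU)
    (hθU : 0 < θU) (hφV : 0 < φV) (hθV : 0 < θV) {c : Fin H → Fin M → Fin N → ℝ}
    {a : Fin H → ℝ} (h : ∀ k, HasExponent φU θU φV θV κ (c k) (a k)) :
    ∃ m : ℝ, 0 < m ∧ ∀ᶠ ε in nhdsWithin (0 : ℝ) (Set.Ioi 0), ENNReal.ofReal (m * ε ^ (∑ k, a k)) ≤
      ∫⁻ p in prodShell κ c ε, ENNReal.ofReal (gamProd φU θU φV θV p) := by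
  choose m hm hev using fun k => (h k).lower
  refine ⟨∏ k, m k, prod_pos fun k _ => hm k, ?_⟩
  filter_upwards [Filter.eventually_all.2 hev, eventually_mem_nhdsWithin] with ε hε hε0
  have hε0 : 0 < ε := hε0
  rw [← lintegral_indicator (measurableSet_prodShell _ _ _)]
  calc ENNReal.ofReal ((∏ k, m k) * ε ^ (∑ k, a k))
      = ∏ k, ENNReal.ofReal (m k * ε ^ a k) := by
        rw [← ENNReal.ofReal_prod_of_nonneg fun k _ =>
          mul_nonneg (hm k).le (Real.rpow_nonneg hε0.le _), Finset.prod_mul_distrib,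
          Real.rpow_sum_of_pos hε0]
    _ ≤ ∏ k, ∫⁻ w, {w ∈ blockDom κ (c k) | 0 < blockSum (c k) w ∧ blockSum (c k) w ≤ ε}.indicator
          (prior φU θU φV θV) w := by
        refine Finset.prod_le_prod' fun k _ => ?_
        rw [lintegral_indicator (measurableSet_shell _ _ _)]
        exact hε k
    _ = _ := (lintegral_blocks M N H _ fun k =>
          (measurable_prior _ _ _ _).indicator (measurableSet_shell _ _ _)).symm
    _ ≤ _ := by
        refine lintegral_mono fun p => ?_
        by_cases hp : p ∈ prodShell κ c ε
        · rw [Set.indicator_of_mem hp, ofReal_gamProd hφU hθU hφV hθV (prodShell_subset _ _ _ hp)]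
          exact (Finset.prod_congr rfl fun k _ => Set.indicator_of_mem (hp k) _).le
        · obtain ⟨k, hk⟩ := not_forall.1 hp
          exact (Finset.prod_eq_zero (mem_univ k) (Set.indicator_of_notMem hk _)).le.trans zero_le

/-- Divergence at and above the critical exponent: the integrals over `prodShell κ c ε` are bounded
below uniformly in `ε`, although these sets decrease to `∅`. -/
theorem core_lower (hM : 1 ≤ M) (hN : 1 ≤ N) (hH : 1 ≤ H) {φU θU φV θV κ : ℝ} (hφU : 0 < φU)
    (hθU : 0 < θU) (hφV : 0 < φV) (hθV : 0 < θV) {c : Fin H → Fin M → Fin N → ℝ}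
    {a : Fin H → ℝ} (ha : ∀ k, 0 < a k) (h : ∀ k, HasExponent φU θU φV θV κ (c k) (a k)) {s : ℝ}
    (hs : (∑ k, a k) / 2 ≤ s) :
    ∫⁻ p in prodDom κ c, ENNReal.ofReal (lossSum c p ^ (-s) * gamProd φU θU φV θV p) = ⊤ := by
  have hM' : (0 : ℝ) < M := by exact_mod_cast hM
  have hN' : (0 : ℝ) < N := by exact_mod_cast hN
  have hH' : (0 : ℝ) < H := by exact_mod_cast hH
  have : Nonempty (Fin H) := ⟨⟨0, hH⟩⟩
  have hA : 0 < ∑ k, a k := Finset.sum_pos (fun k _ => ha k) univ_nonempty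
  set A := ∑ k, a k with hAdef
  obtain ⟨m, hm, hmass⟩ := prodShell_mass hφU hθU hφV hθV h
  set G : (Fin M → Fin H → ℝ) × (Fin H → Fin N → ℝ) → ENNReal := fun p =>
    ENNReal.ofReal (lossSum c p ^ (-s) * gamProd φU θU φV θV p) with hG
  set L : ℝ := (H : ℝ) ^ (-(2 * s)) * m with hL
  have hL0 : 0 < L := by positivity
  have hge : ∀ᶠ ε in nhdsWithin (0 : ℝ) (Set.Ioi 0),
      ENNReal.ofReal L ≤ ∫⁻ p in prodShell κ c ε, G p := by
    filter_upwards [hmass, Ioc_mem_nhdsGT (zero_lt_one (α := ℝ))] with ε hε hε1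
    have hε0 : 0 < ε := hε1.1
    have h1 : L ≤ (H * ε) ^ (-(2 * s)) * (m * ε ^ A) := by
      rw [Real.mul_rpow hH'.le hε0.le, hL]
      have : (1 : ℝ) ≤ ε ^ (-(2 * s)) * ε ^ A := by
        rw [← Real.rpow_add hε0]
        exact Real.one_le_rpow_of_pos_of_le_one_of_nonpos hε0 hε1.2 (by linarith)
      calc (H : ℝ) ^ (-(2 * s)) * m ≤ (H : ℝ) ^ (-(2 * s)) * m * (ε ^ (-(2 * s)) * ε ^ A) :=
            le_mul_of_one_le_right hL0.le this
        _ = _ := by ring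
    calc ENNReal.ofReal L ≤ ENNReal.ofReal ((H * ε) ^ (-(2 * s))) * ENNReal.ofReal (m * ε ^ A) := by
          rw [← ENNReal.ofReal_mul (by positivity)]
          exact ENNReal.ofReal_le_ofReal h1
      _ ≤ ENNReal.ofReal ((H * ε) ^ (-(2 * s))) *
          ∫⁻ p in prodShell κ c ε, ENNReal.ofReal (gamProd φU θU φV θV p) := mul_le_mul' le_rfl hε
      _ = ∫⁻ p in prodShell κ c ε, ENNReal.ofReal ((H * ε) ^ (-(2 * s))) *
          ENNReal.ofReal (gamProd φU θU φV θV p) :=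
          (lintegral_const_mul' _ _ ENNReal.ofReal_ne_top).symm
      _ ≤ _ := by
          refine setLIntegral_mono' (measurableSet_prodShell _ _ _) fun p hp => ?_
          have hp' := prodShell_subset _ _ _ hp
          rw [← ENNReal.ofReal_mul (by positivity)]
          refine ENNReal.ofReal_le_ofReal (mul_le_mul_of_nonneg_right ?_
            (gamProd_nonneg hφU hθU hφV hθV hp'))
          have hF : ∀ i j, 0 ≤ ∑ k, (p.1 i k * p.2 k j - c k i j) := fun i j =>
            Finset.sum_nonneg fun k _ => hp'.2 i j k
          have hKZ := sum_sq_le_sq_sum hF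
          have hZK := sq_sum_le_mul_sum_sq fun i j => ∑ k, (p.1 i k * p.2 k j - c k i j)
          rw [sum_blockSum] at hKZ hZK
          set Z := ∑ k, blockSum (c k) ((fun i => p.1 i k, p.2 k) : (Fin M → ℝ) × (Fin N → ℝ))
          have hZ0 : 0 < Z := Finset.sum_pos (fun k _ => (hp k).2.1) univ_nonempty
          have hZε : Z ≤ H * ε := by
            refine (Finset.sum_le_sum fun k _ => (hp k).2.2).trans ?_
            simp
          have hK : 0 < lossSum c p := by
            have h2 : 0 < Z ^ 2 := by positivity
            exact pos_of_mul_pos_right (h2.trans_le hZK) (by positivity)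
          have hKε : lossSum c p ≤ (H * ε) ^ 2 :=
            hKZ.trans (pow_le_pow_left₀ hZ0.le hZε 2)
          have h3 := Real.rpow_le_rpow_of_nonpos hK hKε (z := -s) (by linarith)
          rw [← Real.rpow_natCast (H * ε) 2, ← Real.rpow_mul (by positivity)] at h3
          rwa [show ((2 : ℕ) : ℝ) * -s = -(2 * s) by push_cast; ring] at h3
  by_contra hfin
  -- the shells decrease to the empty set, so a finite integral would give them vanishing mass
  set μ : Measure ((Fin M → Fin H → ℝ) × (Fin H → Fin N → ℝ)) :=
    (volume.restrict (prodDom κ c)).withDensity G with hμ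
  have hμc : ∀ ε, μ (prodShell κ c ε) = ∫⁻ p in prodShell κ c ε, G p := fun ε => by
    rw [hμ, withDensity_apply _ (measurableSet_prodShell _ _ _),
      Measure.restrict_restrict_of_subset (prodShell_subset _ _ _)]
  have hle : ∀ ε, μ (prodShell κ c ε) ≠ ⊤ := fun ε => by
    rw [hμc]
    exact ne_top_of_le_ne_top hfin (lintegral_mono_set (prodShell_subset _ _ _))
  have hlim := tendsto_measure_biInter_gt (μ := μ) (s := prodShell κ c) (a := 0)
    (fun r _ => (measurableSet_prodShell _ _ _).nullMeasurableSet)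
    (fun i j _ hij p hp k => ⟨(hp k).1, (hp k).2.1, (hp k).2.2.trans hij⟩)
    ⟨1, one_pos, hle 1⟩
  have hempty : ⋂ r > (0 : ℝ), prodShell κ c r = ∅ := by
    refine Set.eq_empty_of_forall_notMem fun p hp => ?_
    simp only [Set.mem_iInter] at hp
    have h0 := (hp 1 one_pos ⟨0, hH⟩).2.1
    have h1 := (hp _ (half_pos h0) ⟨0, hH⟩).2.2
    linarith
  rw [hempty, measure_empty] at hlim
  have h1 := ge_of_tendsto hlim (hge.mono fun ε hε => by
    simpa [hμc] using hε)
  have : 0 < ENNReal.ofReal L := by simpa using hL0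
  exact absurd h1 (not_le.2 this)

end assembly

theorem sum_dite_lt {H H₀ : ℕ} (hH : H₀ ≤ H) (f : Fin H₀ → ℝ) (e : ℝ) :
    (∑ k : Fin H, if h : (k : ℕ) < H₀ then f ⟨k, h⟩ else e) = ∑ k, f k + ((H : ℝ) - H₀) * e := by
  obtain ⟨d, rfl⟩ := Nat.exists_eq_add_of_le hH
  rw [Fin.sum_univ_add]
  simp

/-- Exact RLCT under the sign condition `f_{ij}^k ≥ 0`, where
`f_{ij}^k = u_{ik}v_{kj} − u⁰_{ik}v⁰_{kj}` for `k ≤ H₀` and `f_{ij}^k = u_{ik}v_{kj}`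
for `k > H₀`: the integral of `(‖UV − U₀V₀‖²)^{-s}` times the gamma prior over the
region of `[0,κ]^{M×H} × [0,κ]^{H×N}` where all `f_{ij}^k ≥ 0` is finite iff
`s < ½[(H−H₀)·min{MφU, NφV} + H₀(M+N−1)]`. -/
theorem nmf_rlct_exact_under_sign_condition
    (M N H H₀ : ℕ) (hM : 1 ≤ M) (hN : 1 ≤ N) (hH₀ : 1 ≤ H₀) (hH : H₀ ≤ H)
    (φU θU φV θV κ : ℝ)
    (hφU : 0 < φU) (hθU : 0 < θU) (hφV : 0 < φV) (hθV : 0 < θV) (hκ : 0 < κ)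
    (U₀ : Fin M → Fin H₀ → ℝ) (V₀ : Fin H₀ → Fin N → ℝ)
    (hU₀ : ∀ i k, U₀ i k ∈ Set.Ioo (0 : ℝ) κ) (hV₀ : ∀ k j, V₀ k j ∈ Set.Ioo (0 : ℝ) κ)
    (s : ℝ) :
    (∫⁻ p in {p : (Fin M → Fin H → ℝ) × (Fin H → Fin N → ℝ) |
        ((∀ i k, p.1 i k ∈ Set.Icc (0 : ℝ) κ) ∧ (∀ k j, p.2 k j ∈ Set.Icc (0 : ℝ) κ)) ∧
        (∀ (i : Fin M) (j : Fin N) (k : Fin H),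
          0 ≤ p.1 i k * p.2 k j -
            (if h : (k : ℕ) < H₀ then U₀ i ⟨k, h⟩ * V₀ ⟨k, h⟩ j else 0))},
      ENNReal.ofReal
        ((∑ i, ∑ j, ((∑ k, p.1 i k * p.2 k j) - ∑ k, U₀ i k * V₀ k j) ^ 2) ^ (-s) *
          ((∏ i, ∏ k, θU ^ φU / Real.Gamma φU * p.1 i k ^ (φU - 1) *
              Real.exp (-θU * p.1 i k)) *
           (∏ k, ∏ j, θV ^ φV / Real.Gamma φV * p.2 k j ^ (φV - 1) *
              Real.exp (-θV * p.2 k j))))) ≠ ⊤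
    ↔ s < (((H : ℝ) - (H₀ : ℝ)) * min ((M : ℝ) * φU) ((N : ℝ) * φV) +
        (H₀ : ℝ) * ((M : ℝ) + (N : ℝ) - 1)) / 2 := by
  have hM' : (1 : ℝ) ≤ M := by exact_mod_cast hM
  have hN' : (1 : ℝ) ≤ N := by exact_mod_cast hN
  set c : Fin H → Fin M → Fin N → ℝ := fun k i j =>
    if h : (k : ℕ) < H₀ then U₀ i ⟨k, h⟩ * V₀ ⟨k, h⟩ j else 0 with hc
  set a : Fin H → ℝ := fun k => if (k : ℕ) < H₀ then (M : ℝ) + N - 1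
    else min ((M : ℝ) * φU) ((N : ℝ) * φV) with ha
  have ha0 : ∀ k, 0 < a k := fun k => by
    simp only [ha]
    split_ifs
    · linarith
    · exact lt_min (by positivity) (by positivity)
  have hexp : ∀ k, HasExponent φU θU φV θV κ (c k) (a k) := fun k => by
    by_cases hk : (k : ℕ) < H₀
    · simp only [hc, ha, hk, dif_pos, if_true]
      exact hasExponent_pos hM hN hφU hθU hφV hθV hκ (fun i => hU₀ i _) (fun j => hV₀ _ j)
    · simp only [hc, ha, hk, dif_neg, if_false, not_false_eq_true]
      exact hasExponent_zero hM hN hφU hθU hφV hθV hκ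
  have hsum : ∑ k, a k = ((H : ℝ) - (H₀ : ℝ)) * min ((M : ℝ) * φU) ((N : ℝ) * φV) +
      (H₀ : ℝ) * ((M : ℝ) + (N : ℝ) - 1) := by
    have := sum_dite_lt hH (fun _ => (M : ℝ) + N - 1) (min ((M : ℝ) * φU) ((N : ℝ) * φV))
    simp only [dite_eq_ite] at this
    rw [ha, this]
    simp; ring
  have hloss : ∀ p : (Fin M → Fin H → ℝ) × (Fin H → Fin N → ℝ),
      ∑ i, ∑ j, ((∑ k, p.1 i k * p.2 k j) - ∑ k, U₀ i k * V₀ k j) ^ 2 = lossSum c p := fun p => by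
    unfold lossSum
    refine Finset.sum_congr rfl fun i _ => Finset.sum_congr rfl fun j _ => ?_
    rw [Finset.sum_sub_distrib]
    have := sum_dite_lt hH (fun k => U₀ i k * V₀ k j) 0
    rw [mul_zero, add_zero] at this
    rw [← this]
  simp only [hloss]
  rw [← hsum]
  refine ⟨fun hfin => ?_, fun hs => ?_⟩
  · by_contra hs
    exact hfin (core_lower hM hN (hH₀.trans hH) hφU hθU hφV hθV ha0 hexp (not_lt.1 hs))
  · exact core_upper hM hN (hH₀.trans hH) hφU hθU hφV hθV ha0 hexp hs
end

section
/- Let M, N ≥ 1 and H ≥ H₀ ≥ 1 be integers. Let U = (u_{ik}) ∈ ℝ^{M×H}, V = (v_{kj}) ∈ ℝ^{H×N}, U₀ = (u⁰_{ik}) ∈ ℝ^{M×H₀}, V₀ = (v⁰_{kj}) ∈ ℝ^{H₀×N} all have nonnegative entries, and suppose u_{ik}v_{kj} ≥ u⁰_{ik}v⁰_{kj} for all 1 ≤ i ≤ M, 1 ≤ j ≤ N, and 1 ≤ k ≤ H₀. Then K₁(U,V) + K₂(U,V) ≤ ‖UV − U₀V₀‖² ≤ H·(K₁(U,V) + K₂(U,V)).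 -/
/-!
For fixed `(i, j)`, the entry of `UV − U₀V₀` is a sum of `H` terms `d k`: the differences
`u_{ik}v_{kj} − u⁰_{ik}v⁰_{kj}` for `k < H₀` and the products `u_{ik}v_{kj}` for `H₀ ≤ k < H`.
The sign condition and the nonnegativity of `U`, `V` make every `d k` nonnegative, so the cross
terms in `(∑ d k)²` are nonnegative and `∑ (d k)² ≤ (∑ d k)²`; Cauchy–Schwarz gives
`(∑ d k)² ≤ H ∑ (d k)²`. Summing over `(i, j)` yields both bounds.
-/

open Finset

/-- The bound for a single matrix entry, with `a k = u_{ik}v_{kj}` and `b k = u⁰_{ik}v⁰_{kj}`. -/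
lemma entry_sq_two_sided_bound {H H₀ : ℕ} (hH : H₀ ≤ H) (a b : ℕ → ℝ)
    (ha : ∀ k < H, 0 ≤ a k) (hab : ∀ k < H₀, b k ≤ a k) :
    (∑ k ∈ range H₀, (a k - b k) ^ 2) + ∑ k ∈ Finset.Ico H₀ H, a k ^ 2
      ≤ ((∑ k ∈ range H, a k) - ∑ k ∈ range H₀, b k) ^ 2
    ∧ ((∑ k ∈ range H, a k) - ∑ k ∈ range H₀, b k) ^ 2
      ≤ (H : ℝ) * ((∑ k ∈ range H₀, (a k - b k) ^ 2) + ∑ k ∈ Finset.Ico H₀ H, a k ^ 2) := by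
  let d : ℕ → ℝ := fun k => if k < H₀ then a k - b k else a k
  have hd : ∀ k ∈ range H, 0 ≤ d k := by
    intro k hk
    by_cases h : k < H₀
    · simpa [d, h] using hab k h
    · simpa [d, h] using ha k (mem_range.1 hk)
  have d_lt : ∀ k ∈ range H₀, d k = a k - b k := fun k hk => if_pos (mem_range.1 hk)
  have d_ge : ∀ k ∈ Finset.Ico H₀ H, d k = a k := fun k hk =>
    if_neg (not_lt.2 (Finset.mem_Ico.1 hk).1)
  have hsum : (∑ k ∈ range H, a k) - ∑ k ∈ range H₀, b k = ∑ k ∈ range H, d k := by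
    rw [← sum_range_add_sum_Ico a hH, ← sum_range_add_sum_Ico d hH,
      sum_congr rfl d_lt, sum_congr rfl d_ge, sum_sub_distrib]
    ring
  have hsq : (∑ k ∈ range H₀, (a k - b k) ^ 2) + ∑ k ∈ Finset.Ico H₀ H, a k ^ 2
      = ∑ k ∈ range H, d k ^ 2 := by
    rw [← sum_range_add_sum_Ico (fun k => d k ^ 2) hH]
    congr 1
    · exact sum_congr rfl fun k hk => by rw [d_lt k hk]
    · exact sum_congr rfl fun k hk => by rw [d_ge k hk]
  rw [hsum, hsq]
  refine ⟨sum_sq_le_sq_sum_of_nonneg hd, ?_⟩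
  simpa using sq_sum_le_card_mul_sum_sq (s := range H) (f := d)

/-- Under nonnegativity of all entries and the sign condition
`u_{ik}v_{kj} ≥ u⁰_{ik}v⁰_{kj}` for `k ≤ H₀`, the squared Frobenius norm
`‖UV − U₀V₀‖²` is bounded below by `K₁ + K₂` and above by `H(K₁ + K₂)`, where
`K₁ = Σ_{i,j} Σ_{k ≤ H₀} (u_{ik}v_{kj} − u⁰_{ik}v⁰_{kj})²` and
`K₂ = Σ_{i,j} Σ_{H₀ < k ≤ H} u_{ik}² v_{kj}²`. -/
theorem frobenius_sq_two_sided_bound_sign_condition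
    (M N H H₀ : ℕ) (hM : 1 ≤ M) (hN : 1 ≤ N) (hH₀ : 1 ≤ H₀) (hH : H₀ ≤ H)
    (U V U₀ V₀ : ℕ → ℕ → ℝ)
    (hU : ∀ i < M, ∀ k < H, 0 ≤ U i k)
    (hV : ∀ k < H, ∀ j < N, 0 ≤ V k j)
    (hU₀ : ∀ i < M, ∀ k < H₀, 0 ≤ U₀ i k)
    (hV₀ : ∀ k < H₀, ∀ j < N, 0 ≤ V₀ k j)
    (hsign : ∀ i < M, ∀ j < N, ∀ k < H₀, U₀ i k * V₀ k j ≤ U i k * V k j) :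
    (∑ i ∈ range M, ∑ j ∈ range N, ∑ k ∈ range H₀,
        (U i k * V k j - U₀ i k * V₀ k j) ^ 2) +
      (∑ i ∈ range M, ∑ j ∈ range N, ∑ k ∈ Finset.Ico H₀ H,
        (U i k) ^ 2 * (V k j) ^ 2)
      ≤ ∑ i ∈ range M, ∑ j ∈ range N,
          ((∑ k ∈ range H, U i k * V k j) - ∑ k ∈ range H₀, U₀ i k * V₀ k j) ^ 2
    ∧ ∑ i ∈ range M, ∑ j ∈ range N,
          ((∑ k ∈ range H, U i k * V k j) - ∑ k ∈ range H₀, U₀ i k * V₀ k j) ^ 2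
      ≤ (H : ℝ) *
        ((∑ i ∈ range M, ∑ j ∈ range N, ∑ k ∈ range H₀,
            (U i k * V k j - U₀ i k * V₀ k j) ^ 2) +
          (∑ i ∈ range M, ∑ j ∈ range N, ∑ k ∈ Finset.Ico H₀ H,
            (U i k) ^ 2 * (V k j) ^ 2)) := by
  have key := fun i (hi : i ∈ range M) j (hj : j ∈ range N) =>
    entry_sq_two_sided_bound hH (fun k => U i k * V k j) (fun k => U₀ i k * V₀ k j)
      (fun k hk => mul_nonneg (hU i (mem_range.1 hi) k hk) (hV k hk j (mem_range.1 hj)))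
      (hsign i (mem_range.1 hi) j (mem_range.1 hj))
  simp only [← mul_pow, ← sum_add_distrib, mul_sum (range M), mul_sum (range N)]
  exact ⟨sum_le_sum fun i hi => sum_le_sum fun j hj => (key i hi j hj).1,
    sum_le_sum fun i hi => sum_le_sum fun j hj => (key i hi j hj).2⟩
end
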